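/- arXiv:1504.06542 — 4 statements merged into one kernel-verified Lean document; each statement's English description precedes it below -/
import Mathlib

section
/- Let X, Y be subschemes of a scheme Z with X ∪ Y = Z (scheme-theoretically) and with scheme-theoretic intersection X ∩ Y equal to one reduced point. If f : A → Z is a morphism whose restrictions f^{-1}(X) → X and f^{-1}(Y) → Y are isomorphisms, then f is an isomorphism. -/
open CategoryTheory CategoryTheory.Limits AlgebraicGeometry

universe u

/-- In a pushout of commutative rings along a surjection `π`, the kernel of the map out of `B` is
the extension of `ker π`. -/
lemma CommRingCat.ker_inl_of_isPushout {R B Q P : CommRingCat.{u}} {φ : R ⟶ B} {π : R ⟶ Q}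
    {inl : B ⟶ P} {inr : Q ⟶ P} (h : IsPushout φ π inl inr) (hπ : Function.Surjective π) :
    RingHom.ker inl.hom = (RingHom.ker π.hom).map φ.hom := by
  apply le_antisymm
  · intro b hb
    let I := (RingHom.ker π.hom).map φ.hom
    let k : {k : R →+* B ⧸ I // RingHom.ker π.hom ≤ RingHom.ker k} :=
      ⟨(Ideal.Quotient.mk I).comp φ.hom, fun _ hr ↦
        Ideal.Quotient.eq_zero_iff_mem.mpr (Ideal.mem_map_of_mem φ.hom hr)⟩
    let g : Q →+* B ⧸ I := π.hom.liftOfSurjective hπ k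
    have hg : φ ≫ CommRingCat.ofHom (Ideal.Quotient.mk I) = π ≫ CommRingCat.ofHom g := by
      ext r
      exact (π.hom.liftOfRightInverse_comp_apply _ (Function.rightInverse_surjInv hπ) k r).symm
    have hd := congr($(h.inl_desc _ _ hg) b)
    rw [CommRingCat.comp_apply, RingHom.mem_ker.mp hb, map_zero] at hd
    exact Ideal.Quotient.eq_zero_iff_mem.mp hd.symm
  · rw [Ideal.map_le_iff_le_comap]
    intro r hr
    have := congr($(h.w) r)
    simp only [CommRingCat.comp_apply] at this
    rw [Ideal.mem_comap, RingHom.mem_ker]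
    exact this.trans (by rw [RingHom.mem_ker.mp hr, map_zero])

/-- A ring homomorphism `φ : R → B` is bijective if it becomes bijective modulo two ideals with zero
intersection. The hypotheses express that `R / I → B / I B` is bijective, with inverse induced by
`B → R / I`, and likewise for `J`. -/
lemma RingHom.bijective_of_inf_eq_bot {R B : Type*} [CommRing R] [CommRing B] (φ : R →+* B)
    {I J : Ideal R} (hIJ : I ⊓ J = ⊥)
    (hI : (I.map φ).comap φ ≤ I) (hJ : (J.map φ).comap φ ≤ J)
    (hI' : ∀ b, ∃ r, b - φ r ∈ I.map φ) (hJ' : ∀ b, ∃ r, b - φ r ∈ J.map φ) :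
    Function.Bijective φ := by
  constructor
  · rw [injective_iff_map_eq_zero]
    intro r hr
    have : r ∈ I ⊓ J := ⟨hI (by simp [Ideal.mem_comap, hr]), hJ (by simp [Ideal.mem_comap, hr])⟩
    simpa [hIJ] using this
  · have hmul : I.map φ * J.map φ = ⊥ := by
      rw [← Ideal.map_mul, le_bot_iff.mp (Ideal.mul_le_inf.trans hIJ.le), Ideal.map_bot]
    have hle : ∀ b ∈ I.map φ, ∃ r ∈ I, φ r = b := by
      intro b hb
      refine Submodule.span_induction (fun _ ⟨r, hr, e⟩ ↦ ⟨r, hr, e⟩) ⟨0, zero_mem _, map_zero φ⟩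
        ?_ ?_ hb
      · rintro _ _ - - ⟨r, hr, rfl⟩ ⟨t, ht, rfl⟩
        exact ⟨r + t, add_mem hr ht, map_add φ r t⟩
      · rintro c _ - ⟨r, hr, rfl⟩
        obtain ⟨t, ht⟩ := hJ' c
        have h0 := Ideal.mul_mem_mul (Ideal.mem_map_of_mem φ hr) ht
        rw [hmul, Ideal.mem_bot, mul_sub, sub_eq_zero] at h0
        exact ⟨r * t, I.mul_mem_right t hr, by rw [map_mul, ← h0, smul_eq_mul, mul_comm]⟩
    intro b
    obtain ⟨r, hr⟩ := hI' b
    obtain ⟨t, -, ht⟩ := hle _ hr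
    exact ⟨t + r, by rw [map_add, ht, sub_add_cancel]⟩

namespace AlgebraicGeometry

/-- If `f : A ⟶ Z` is an isomorphism over `i : X ⟶ Z`, then so is any restriction of `f` to an
open subscheme of `Z`. -/
lemma isIso_pullback_snd_morphismRestrict {A X Z : Scheme.{u}} (f : A ⟶ Z) (i : X ⟶ Z)
    [IsIso (pullback.snd f i)] (U : Z.Opens) :
    IsIso (pullback.snd (f ∣_ U) (i ∣_ U)) := by
  have h := (IsPullback.of_hasPullback (f ∣_ U) (i ∣_ U)).flip.paste_vert
    (isPullback_morphismRestrict f U)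
  rw [morphismRestrict_ι] at h
  have h' := IsPullback.of_bot' h (IsPullback.of_hasPullback f i).flip
  exact (MorphismProperty.isomorphisms Scheme).of_isPullback h'.flip ‹IsIso (pullback.snd f i)›

/-- If `f : A ⟶ Z` is an isomorphism over `i : X ⟶ Z`, then `i` lifts to a section over `X`
exhibiting `X` as its own preimage under `f`. -/
lemma exists_isPullback_id {A X Z : Scheme.{u}} (f : A ⟶ Z) (i : X ⟶ Z)
    [IsIso (pullback.snd f i)] : ∃ s : X ⟶ A, IsPullback s (𝟙 X) f i :=
  ⟨inv (pullback.snd f i) ≫ pullback.fst f i,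
    (IsPullback.of_hasPullback f i).of_iso (asIso (pullback.snd f i)) (Iso.refl _) (Iso.refl _)
      (Iso.refl _) (by simp) (by simp) (by simp) (by simp)⟩

lemma eq_of_isPullback_id {A X Z : Scheme.{u}} {f : A ⟶ Z} {i : X ⟶ Z} {s : X ⟶ A}
    (h : IsPullback s (𝟙 X) f i) {a : A} {x : X} (e : f a = i x) : s x = a := by
  obtain ⟨p, hp, hp'⟩ := Scheme.Pullback.exists_preimage_pullback a x e
  have h₁ : pullback.snd f i ≫ s = pullback.fst f i := by
    rw [← h.isoPullback_inv_fst, ← h.isoPullback_inv_snd]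
    simp
  rw [← hp, ← hp', ← h₁]
  simp

/-- A morphism that is an isomorphism over two closed subschemes covering the target is a
homeomorphism. -/
lemma isHomeomorph_of_isPullback_id {A X Y Z : Scheme.{u}} {f : A ⟶ Z} {iX : X ⟶ Z} {iY : Y ⟶ Z}
    [IsClosedImmersion iX] [IsClosedImmersion iY] {sX : X ⟶ A} {sY : Y ⟶ A}
    (hX : IsPullback sX (𝟙 X) f iX) (hY : IsPullback sY (𝟙 Y) f iY)
    (hcover : ∀ z : Z, (∃ x : X, iX x = z) ∨ (∃ y : Y, iY y = z)) :
    IsHomeomorph f := by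
  have hX' (x : X) : f (sX x) = iX x := by simpa using congr($(hX.w) x)
  have hY' (y : Y) : f (sY y) = iY y := by simpa using congr($(hY.w) y)
  rw [isHomeomorph_iff_continuous_isClosedMap_bijective]
  refine ⟨f.continuous, fun C hC ↦ ?_, fun a b hab ↦ ?_, fun z ↦ ?_⟩
  · have : f '' C = iX '' (sX ⁻¹' C) ∪ iY '' (sY ⁻¹' C) := by
      ext z
      constructor
      · rintro ⟨a, ha, rfl⟩
        rcases hcover (f a) with ⟨x, hx⟩ | ⟨y, hy⟩
        · exact .inl ⟨x, by rwa [Set.mem_preimage, eq_of_isPullback_id hX hx.symm], hx⟩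
        · exact .inr ⟨y, by rwa [Set.mem_preimage, eq_of_isPullback_id hY hy.symm], hy⟩
      · rintro (⟨x, hx, rfl⟩ | ⟨y, hy, rfl⟩)
        · exact ⟨_, hx, hX' x⟩
        · exact ⟨_, hy, hY' y⟩
    rw [this]
    exact (iX.isClosedEmbedding.isClosedMap _ (hC.preimage sX.continuous)).union
      (iY.isClosedEmbedding.isClosedMap _ (hC.preimage sY.continuous))
  · rcases hcover (f a) with ⟨x, hx⟩ | ⟨y, hy⟩
    · rw [← eq_of_isPullback_id hX hx.symm, eq_of_isPullback_id hX (hab.symm.trans hx.symm)]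
    · rw [← eq_of_isPullback_id hY hy.symm, eq_of_isPullback_id hY (hab.symm.trans hy.symm)]
  · rcases hcover z with ⟨x, rfl⟩ | ⟨y, rfl⟩
    · exact ⟨_, hX' x⟩
    · exact ⟨_, hY' y⟩

/-- If `f : A ⟶ Z` is a morphism of affine schemes that is an isomorphism over a closed subscheme
`X` of `Z` with ideal `I`, then `f` is an isomorphism modulo `I` on global sections. -/
lemma comap_map_ker_appTop_le_and_exists_sub_mem {A X Z : Scheme.{u}} [IsAffine A] [IsAffine Z]
    {f : A ⟶ Z} {i : X ⟶ Z} [IsClosedImmersion i] {s : X ⟶ A} (h : IsPullback s (𝟙 X) f i) :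
    ((RingHom.ker i.appTop.hom).map f.appTop.hom).comap f.appTop.hom ≤ RingHom.ker i.appTop.hom ∧
      ∀ b, ∃ r, b - f.appTop.hom r ∈ (RingHom.ker i.appTop.hom).map f.appTop.hom := by
  obtain ⟨_, hi⟩ := IsClosedImmersion.isAffine_surjective_of_isAffine i
  have hs (r) : s.appTop (f.appTop r) = i.appTop r := by
    simpa using! congr(($(h.w)).appTop r)
  rw [← CommRingCat.ker_inl_of_isPushout (isPushout_appTop_of_isPullback h) hi]
  refine ⟨fun r hr ↦ (hs r).symm.trans hr, fun b ↦ ?_⟩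
  obtain ⟨r, hr⟩ := hi (s.appTop b)
  refine ⟨r, ?_⟩
  rw [RingHom.mem_ker, map_sub, sub_eq_zero]
  exact hr.symm.trans (hs r).symm

/-- A morphism of affine schemes that is an isomorphism over two closed subschemes with
scheme-theoretic union the whole target is an isomorphism. -/
lemma isIso_of_isIso_pullback_snd_of_isAffine {A X Y Z : Scheme.{u}} [IsAffine A] [IsAffine Z]
    (f : A ⟶ Z) (iX : X ⟶ Z) (iY : Y ⟶ Z) [IsClosedImmersion iX] [IsClosedImmersion iY]
    [IsIso (pullback.snd f iX)] [IsIso (pullback.snd f iY)]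
    (hker : RingHom.ker iX.appTop.hom ⊓ RingHom.ker iY.appTop.hom = ⊥) :
    IsIso f := by
  obtain ⟨sX, hX⟩ := exists_isPullback_id f iX
  obtain ⟨sY, hY⟩ := exists_isPullback_id f iY
  obtain ⟨hI, hI'⟩ := comap_map_ker_appTop_le_and_exists_sub_mem hX
  obtain ⟨hJ, hJ'⟩ := comap_map_ker_appTop_le_and_exists_sub_mem hY
  have : IsIso f.appTop := (ConcreteCategory.isIso_iff_bijective _).mpr
    (RingHom.bijective_of_inf_eq_bot f.appTop.hom hker hI hJ hI' hJ')
  exact ((MorphismProperty.isomorphisms Scheme).arrow_mk_iso_iff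
    (arrowIsoSpecΓOfIsAffine f)).mpr (inferInstanceAs (IsIso (Spec.map f.appTop)))

/-- A morphism that is an isomorphism over two closed subschemes with scheme-theoretic union the
whole target is an isomorphism. -/
lemma isIso_of_isIso_pullback_snd {A X Y Z : Scheme.{u}} (f : A ⟶ Z) (iX : X ⟶ Z) (iY : Y ⟶ Z)
    [IsClosedImmersion iX] [IsClosedImmersion iY]
    [IsIso (pullback.snd f iX)] [IsIso (pullback.snd f iY)]
    (hcover : ∀ z : Z, (∃ x : X, iX x = z) ∨ (∃ y : Y, iY y = z))
    (hker : ∀ U : Z.Opens, RingHom.ker (iX.app U).hom ⊓ RingHom.ker (iY.app U).hom = ⊥) :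
    IsIso f := by
  obtain ⟨sX, hX⟩ := exists_isPullback_id f iX
  obtain ⟨sY, hY⟩ := exists_isPullback_id f iY
  have hf := isHomeomorph_of_isPullback_id hX hY hcover
  have : IsAffineHom f :=
    isAffineHom_of_isInducing f hf.isInducing hf.isClosedEmbedding.isClosed_range
  refine (IsZariskiLocalAtTarget.iff_of_iSup_eq_top (P := .isomorphisms Scheme) _
    (iSup_affineOpens_eq_top Z)).mpr fun U ↦ ?_
  have : IsAffine U.1.toScheme := U.2
  have : IsAffine (f ⁻¹ᵁ U.1).toScheme := U.2.preimage f
  have := isIso_pullback_snd_morphismRestrict f iX U.1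
  have := isIso_pullback_snd_morphismRestrict f iY U.1
  have ker_eq {T : Scheme.{u}} (i : T ⟶ Z) :
      RingHom.ker (i ∣_ U.1).appTop.hom = RingHom.ker (i.app (U.1.ι ''ᵁ ⊤)).hom := by
    rw [morphismRestrict_appTop]
    ext r
    exact map_eq_zero_iff _ (ConcreteCategory.bijective_of_isIso (T.presheaf.map
      (eqToHom (image_morphismRestrict_preimage i U.1 ⊤)).op)).1
  have : IsClosedImmersion (iX ∣_ U.1) := IsZariskiLocalAtTarget.restrict ‹_› _
  have : IsClosedImmersion (iY ∣_ U.1) := IsZariskiLocalAtTarget.restrict ‹_› _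
  exact isIso_of_isIso_pullback_snd_of_isAffine (f ∣_ U.1) (iX ∣_ U.1) (iY ∣_ U.1)
    (by rw [ker_eq, ker_eq]; exact hker _)

end AlgebraicGeometry

/-- Let `Z` be a scheme which is the scheme-theoretic union of two closed subschemes
`X` and `Y` (i.e. `O_Z → i_{X*}O_X ⊕ i_{Y*}O_Y` is injective and `X ∪ Y = Z`
topologically), whose scheme-theoretic intersection `X ∩ Y` is one reduced point
(the spectrum `S` of a field `K`, with `IsPullback` expressing that `S` is the
scheme-theoretic intersection).  If `f : A ⟶ Z` is a morphism whose restrictions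
`f⁻¹(X) → X` and `f⁻¹(Y) → Y` are isomorphisms, then `f` is an isomorphism. -/
theorem isIso_of_restrictions_isIso_nodal
    (K : Type) [Field K]
    (X Y Z A : Scheme)
    (σX : Spec (CommRingCat.of K) ⟶ X) (σY : Spec (CommRingCat.of K) ⟶ Y)
    (iX : X ⟶ Z) (iY : Y ⟶ Z)
    [IsClosedImmersion iX] [IsClosedImmersion iY]
    -- the scheme-theoretic intersection `X ∩ Y` is the single reduced point `Spec K` :
    (hinter : IsPullback σX σY iX iY)
    -- scheme-theoretic union `X ∪ Y = Z` : topological surjectivity and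
    -- injectivity of `O_Z → i_{X*} O_X ⊕ i_{Y*} O_Y` :
    (hcover : ∀ z : Z, (∃ x : X, iX.base x = z) ∨ (∃ y : Y, iY.base y = z))
    (hsheaf : ∀ U : Z.Opens,
      Function.Injective (fun s : Γ(Z, U) => ((iX.app U) s, (iY.app U) s)))
    (f : A ⟶ Z)
    (hfX : IsIso (pullback.snd f iX)) (hfY : IsIso (pullback.snd f iY)) :
    IsIso f := by
  refine isIso_of_isIso_pullback_snd f iX iY hcover fun U ↦ eq_bot_iff.mpr fun s hs ↦ ?_
  refine hsheaf U (Prod.ext ?_ ?_)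
  · exact hs.1.trans (map_zero (iX.app U).hom).symm
  · exact hs.2.trans (map_zero (iY.app U).hom).symm
end

section
/- Let Z be the nodal gluing of S-schemes X and Y along sections σ_X : S → X and σ_Y : S → Y. Then Z is the pushout of the diagram S → X, S → Y in the category of S-schemes: giving a morphism Z → Z' over S is the same as giving morphisms X → Z' and Y → Z' over S that agree after composing with σ_X and σ_Y. -/
open CategoryTheory CategoryTheory.Limits AlgebraicGeometry

universe u

/-- A pushout square of commutative rings whose legs are surjective and jointly injective is
also a pullback square. -/
lemma CommRingCat.isPullback_of_isPushout_of_surjective {R A B P : CommRingCat.{u}}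
    {f : R ⟶ A} {g : R ⟶ B} {inl : A ⟶ P} {inr : B ⟶ P} (h : IsPushout f g inl inr)
    (hf : Function.Surjective f) (hg : Function.Surjective g)
    (hfg : Function.Injective fun r : R ↦ (f r, g r)) : IsPullback f g inl inr := by
  refine IsPullback.of_map (forget CommRingCat) h.w ?_
  refine (Types.isPullback_iff _ _ _ _).mpr ⟨?_, ?_, ?_⟩
  · rw [← Functor.map_comp, ← Functor.map_comp, h.w]
  · rintro x y ⟨h₁, h₂⟩
    exact hfg (Prod.ext h₁ h₂)
  · intro (a : A) (b : B) (hab : inl a = inr b)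
    obtain ⟨r, rfl⟩ := hf a
    obtain ⟨r', rfl⟩ := hg b
    let K := RingHom.ker f.hom ⊔ RingHom.ker g.hom
    let α : A ⟶ CommRingCat.of (R ⧸ K) := CommRingCat.ofHom <|
      RingHom.liftOfSurjective f.hom hf ⟨Ideal.Quotient.mk K, by
        rw [Ideal.mk_ker]; exact le_sup_left⟩
    let β : B ⟶ CommRingCat.of (R ⧸ K) := CommRingCat.ofHom <|
      RingHom.liftOfSurjective g.hom hg ⟨Ideal.Quotient.mk K, by
        rw [Ideal.mk_ker]; exact le_sup_right⟩
    have hα (x : R) : α (f x) = Ideal.Quotient.mk K x :=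
      RingHom.liftOfRightInverse_comp_apply _ _ _ _ _
    have hβ (x : R) : β (g x) = Ideal.Quotient.mk K x :=
      RingHom.liftOfRightInverse_comp_apply _ _ _ _ _
    have hαβ : f ≫ α = g ≫ β := by
      ext x
      exact (hα x).trans (hβ x).symm
    have hK : Ideal.Quotient.mk K r = Ideal.Quotient.mk K r' := by
      have h₁ := congr($(h.inl_desc α β hαβ) (f r))
      have h₂ := congr($(h.inr_desc α β hαβ) (g r'))
      rw [CommRingCat.comp_apply] at h₁ h₂
      rw [← hα, ← hβ, ← h₁, ← h₂, hab]
    obtain ⟨i, hi, j, hj, hij⟩ := Submodule.mem_sup.mp (Ideal.Quotient.eq.mp hK)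
    rw [RingHom.mem_ker] at hi hj
    refine ⟨(r - i : R), ?_, ?_⟩
    · change f.hom (r - i) = f.hom r
      rw [map_sub, hi, sub_zero]
    · change g.hom (r - i) = g.hom r'
      rw [show r - i = r' + j by linear_combination -hij, map_add, hj, add_zero]

namespace AlgebraicGeometry

/-- `Z` is the scheme-theoretic union of the images of `iX` and `iY`: these morphisms are
jointly surjective, and sections of `𝒪_Z` are determined by their pullbacks. -/
structure IsSchemeTheoreticUnion {X Y Z : Scheme.{u}} (iX : X ⟶ Z) (iY : Y ⟶ Z) : Prop where
  exists_preimage : ∀ z : Z, (∃ x : X, iX x = z) ∨ (∃ y : Y, iY y = z)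
  app_injective : ∀ U : Z.Opens,
    Function.Injective (fun s : Γ(Z, U) ↦ ((iX.app U) s, (iY.app U) s))

namespace IsSchemeTheoreticUnion

variable {X Y Z W : Scheme.{u}} {iX : X ⟶ Z} {iY : Y ⟶ Z}

lemma restrict (h : IsSchemeTheoreticUnion iX iY) (V : Z.Opens) :
    IsSchemeTheoreticUnion (iX ∣_ V) (iY ∣_ V) where
  exists_preimage z := by
    obtain ⟨x, hx⟩ | ⟨y, hy⟩ := h.exists_preimage z.1
    · exact .inl ⟨⟨x, show iX x ∈ V from hx ▸ z.2⟩,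
        Subtype.ext ((morphismRestrict_base_coe iX V _).trans hx)⟩
    · exact .inr ⟨⟨y, show iY y ∈ V from hy ▸ z.2⟩,
        Subtype.ext ((morphismRestrict_base_coe iY V _).trans hy)⟩
  app_injective U s t hst := by
    have key {T : Scheme.{u}} (i : T ⟶ Z) (e : (i ∣_ V).app U s = (i ∣_ V).app U t) :
        i.app (V.ι ''ᵁ U) s = i.app (V.ι ''ᵁ U) t := by
      have hi (r : Γ(V, U)) : (i ∣_ V).app U r = T.presheaf.map
          (eqToHom (image_morphismRestrict_preimage i V U)).op (i.app (V.ι ''ᵁ U) r) :=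
        congr($(morphismRestrict_app i V U) r)
      exact (ConcreteCategory.bijective_of_isIso (T.presheaf.map
        (eqToHom (image_morphismRestrict_preimage i V U)).op)).1
          ((hi s).symm.trans (e.trans (hi t)))
    obtain ⟨h₁, h₂⟩ := Prod.ext_iff.mp hst
    exact h.app_injective _ (Prod.ext (key iX h₁) (key iY h₂))

lemma hom_ext (h : IsSchemeTheoreticUnion iX iY) {p q : Z ⟶ W}
    (hX : iX ≫ p = iX ≫ q) (hY : iY ≫ p = iY ≫ q) : p = q := by
  have hbase : p.base = q.base := by
    ext z
    obtain ⟨x, rfl⟩ | ⟨y, rfl⟩ := h.exists_preimage z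
    · exact congr($hX x)
    · exact congr($hY y)
  refine Scheme.Hom.ext hbase fun U ↦ ?_
  have key {T : Scheme.{u}} (i : T ⟶ Z) (hi : i ≫ p = i ≫ q) :
      (p.app U ≫ Z.presheaf.map
        (eqToHom congr((TopologicalSpace.Opens.map $hbase.symm).obj U)).op) ≫ i.app (q ⁻¹ᵁ U) =
          q.app U ≫ i.app (q ⁻¹ᵁ U) := by
    have := Scheme.Hom.congr_app hi.symm U
    rw [Scheme.Hom.comp_app, Scheme.Hom.comp_app] at this
    rw [this, Category.assoc]
    exact (p.app U ≫= i.naturality _).trans (Category.assoc _ _ _).symm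
  ext s
  exact h.app_injective _ (Prod.ext congr($(key iX hX) s) congr($(key iY hY) s))

/-- Morphisms into an affine scheme glue along closed subschemes covering an affine scheme. -/
lemma exists_desc_of_isAffine (h : IsSchemeTheoreticUnion iX iY)
    [IsClosedImmersion iX] [IsClosedImmersion iY] [IsAffine Z] [IsAffine W]
    (f : X ⟶ W) (g : Y ⟶ W) (hfg : pullback.fst iX iY ≫ f = pullback.snd iX iY ≫ g) :
    ∃ p : Z ⟶ W, iX ≫ p = f ∧ iY ≫ p = g := by
  have : IsAffine X := isAffine_of_isAffineHom iX
  have : IsAffine Y := isAffine_of_isAffineHom iY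
  have H := CommRingCat.isPullback_of_isPushout_of_surjective
    (isPushout_appTop_of_isPullback (IsPullback.of_hasPullback iX iY))
    (iX.app_surjective ⊤ (isAffineOpen_top Z)) (iY.app_surjective ⊤ (isAffineOpen_top Z))
    (h.app_injective ⊤)
  have hw : f.appTop ≫ (pullback.fst iX iY).appTop = g.appTop ≫ (pullback.snd iX iY).appTop := by
    rw [← Scheme.Hom.comp_appTop, ← Scheme.Hom.comp_appTop, hfg]
  refine ⟨Z.toSpecΓ ≫ Spec.map (H.lift _ _ hw) ≫ W.isoSpec.inv, ?_, ?_⟩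
  · rw [Scheme.toSpecΓ_naturality_assoc, ← Spec.map_comp_assoc, H.lift_fst,
      ← Scheme.toSpecΓ_naturality_assoc, Scheme.toSpecΓ_isoSpec_inv, Category.comp_id]
  · rw [Scheme.toSpecΓ_naturality_assoc, ← Spec.map_comp_assoc, H.lift_snd,
      ← Scheme.toSpecΓ_naturality_assoc, Scheme.toSpecΓ_isoSpec_inv, Category.comp_id]

lemma exists_image (h : IsSchemeTheoreticUnion iX iY)
    [IsClosedImmersion iX] [IsClosedImmersion iY]
    (f : X ⟶ W) (g : Y ⟶ W) (hfg : pullback.fst iX iY ≫ f = pullback.snd iX iY ≫ g) (z : Z) :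
    ∃ w : W, (∀ x, iX x = z → f x = w) ∧ (∀ y, iY y = z → g y = w) := by
  have H (x : X) (y : Y) (hxy : iX x = iY y) : f x = g y := by
    obtain ⟨s, rfl, rfl⟩ := Scheme.Pullback.exists_preimage_pullback x y hxy
    exact congr($hfg s)
  obtain ⟨x, rfl⟩ | ⟨y, rfl⟩ := h.exists_preimage z
  · exact ⟨f x, fun x₂ hx₂ ↦ congr_arg f (iX.isClosedEmbedding.injective hx₂),
      fun y hy ↦ (H x y hy.symm).symm⟩
  · exact ⟨g y, fun x hx ↦ H x y hx,
      fun y₂ hy₂ ↦ congr_arg g (iY.isClosedEmbedding.injective hy₂)⟩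

/-- Compatible morphisms on the two closed subschemes glue locally. -/
lemma exists_desc_restrict (h : IsSchemeTheoreticUnion iX iY)
    [IsClosedImmersion iX] [IsClosedImmersion iY]
    (f : X ⟶ W) (g : Y ⟶ W) (hfg : pullback.fst iX iY ≫ f = pullback.snd iX iY ≫ g) (z : Z) :
    ∃ V : Z.Opens, z ∈ V ∧ ∃ p : V.toScheme ⟶ W,
      iX ∣_ V ≫ p = (iX ⁻¹ᵁ V).ι ≫ f ∧ iY ∣_ V ≫ p = (iY ⁻¹ᵁ V).ι ≫ g := by
  obtain ⟨w, hwX, hwY⟩ := h.exists_image f g hfg z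
  obtain ⟨U, hU, hwU, -⟩ := exists_isAffineOpen_mem_and_subset (x := w) (U := ⊤) trivial
  let V₀ : Z.Opens := ⟨(iX '' (f ⁻¹ᵁ U : Set X)ᶜ ∪ iY '' (g ⁻¹ᵁ U : Set Y)ᶜ)ᶜ,
    ((iX.isClosedEmbedding.isClosedMap _ (f ⁻¹ᵁ U).isOpen.isClosed_compl).union
      (iY.isClosedEmbedding.isClosedMap _ (g ⁻¹ᵁ U).isOpen.isClosed_compl)).isOpen_compl⟩
  have hz : z ∈ V₀ := by
    rintro (⟨x, hx, rfl⟩ | ⟨y, hy, rfl⟩)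
    · exact hx (show f x ∈ U from hwX x rfl ▸ hwU)
    · exact hy (show g y ∈ U from hwY y rfl ▸ hwU)
  obtain ⟨V, hV, hzV, hVV₀⟩ := exists_isAffineOpen_mem_and_subset hz
  have hfU : Set.range ((iX ⁻¹ᵁ V).ι ≫ f) ⊆ Set.range U.ι := by
    rintro _ ⟨x, rfl⟩
    rw [Scheme.Opens.range_ι]
    by_contra hx
    exact hVV₀ x.2 (.inl ⟨x.1, hx, rfl⟩)
  have hgU : Set.range ((iY ⁻¹ᵁ V).ι ≫ g) ⊆ Set.range U.ι := by
    rintro _ ⟨y, rfl⟩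
    rw [Scheme.Opens.range_ι]
    by_contra hy
    exact hVV₀ y.2 (.inr ⟨y.1, hy, rfl⟩)
  have : IsAffine V.toScheme := hV
  have : IsAffine U.toScheme := hU
  obtain ⟨p, hpX, hpY⟩ := (h.restrict V).exists_desc_of_isAffine
    (IsOpenImmersion.lift U.ι _ hfU) (IsOpenImmersion.lift U.ι _ hgU) (by
      let s : pullback (iX ∣_ V) (iY ∣_ V) ⟶ pullback iX iY :=
        pullback.map _ _ _ _ (iX ⁻¹ᵁ V).ι (iY ⁻¹ᵁ V).ι V.ι (by simp) (by simp)
      rw [← cancel_mono U.ι]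
      have h₁ : s ≫ pullback.fst iX iY = pullback.fst _ _ ≫ (iX ⁻¹ᵁ V).ι := pullback.lift_fst _ _ _
      have h₂ : s ≫ pullback.snd iX iY = pullback.snd _ _ ≫ (iY ⁻¹ᵁ V).ι := pullback.lift_snd _ _ _
      rw [Category.assoc, Category.assoc, IsOpenImmersion.lift_fac, IsOpenImmersion.lift_fac,
        ← reassoc_of% h₁, ← reassoc_of% h₂, hfg])
  refine ⟨V, hzV, p ≫ U.ι, ?_, ?_⟩
  · rw [reassoc_of% hpX, IsOpenImmersion.lift_fac]
  · rw [reassoc_of% hpY, IsOpenImmersion.lift_fac]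

lemma exists_desc (h : IsSchemeTheoreticUnion iX iY)
    [IsClosedImmersion iX] [IsClosedImmersion iY]
    (f : X ⟶ W) (g : Y ⟶ W) (hfg : pullback.fst iX iY ≫ f = pullback.snd iX iY ≫ g) :
    ∃ p : Z ⟶ W, iX ≫ p = f ∧ iY ≫ p = g := by
  choose V hzV p hpX hpY using h.exists_desc_restrict f g hfg
  have homOfLE_comp {T : Scheme.{u}} (i : T ⟶ Z) (k : T ⟶ W) (U U' : Z.Opens) (e : U ≤ U')
      (q : U'.toScheme ⟶ W) (hq : i ∣_ U' ≫ q = (i ⁻¹ᵁ U').ι ≫ k) :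
      i ∣_ U ≫ Z.homOfLE e ≫ q = (i ⁻¹ᵁ U).ι ≫ k := by
    have : i ∣_ U ≫ Z.homOfLE e = T.homOfLE (i.preimage_mono e) ≫ i ∣_ U' := by
      simp [← cancel_mono U'.ι]
    rw [reassoc_of% this, hq, Scheme.homOfLE_ι_assoc]
  let 𝒰 := Z.openCoverOfIsOpenCover V
    (top_le_iff.mp fun z _ ↦ TopologicalSpace.Opens.mem_iSup.mpr ⟨z, hzV z⟩)
  have hcompat (a b : Z) : pullback.fst (V a).ι (V b).ι ≫ p a = pullback.snd _ _ ≫ p b := by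
    rw [← cancel_epi (isPullback_opens_inf (V a) (V b)).isoPullback.hom,
      IsPullback.isoPullback_hom_fst_assoc, IsPullback.isoPullback_hom_snd_assoc]
    apply (h.restrict (V a ⊓ V b)).hom_ext
    · rw [homOfLE_comp iX f _ _ _ _ (hpX a), homOfLE_comp iX f _ _ _ _ (hpX b)]
    · rw [homOfLE_comp iY g _ _ _ _ (hpY a), homOfLE_comp iY g _ _ _ _ (hpY b)]
  have hι (z : Z) : (V z).ι ≫ 𝒰.glueMorphisms p hcompat = p z := 𝒰.ι_glueMorphisms p hcompat z
  refine ⟨𝒰.glueMorphisms p hcompat, ?_, ?_⟩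
  · refine Scheme.hom_ext_of_forall _ _ fun x ↦ ⟨iX ⁻¹ᵁ V (iX x), hzV _, ?_⟩
    rw [← morphismRestrict_ι_assoc, hι, hpX]
  · refine Scheme.hom_ext_of_forall _ _ fun y ↦ ⟨iY ⁻¹ᵁ V (iY y), hzV _, ?_⟩
    rw [← morphismRestrict_ι_assoc, hι, hpY]

/-- A scheme-theoretic union of two closed subschemes is their pushout along the
scheme-theoretic intersection. -/
lemma isPushout {S : Scheme.{u}} {σX : S ⟶ X} {σY : S ⟶ Y} (h : IsSchemeTheoreticUnion iX iY)
    [IsClosedImmersion iX] [IsClosedImmersion iY] (hS : IsPullback σX σY iX iY) :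
    IsPushout σX σY iX iY := by
  have hdesc (s : PushoutCocone σX σY) : ∃ p : Z ⟶ s.pt, iX ≫ p = s.inl ∧ iY ≫ p = s.inr :=
    h.exists_desc s.inl s.inr (by
      rw [← cancel_epi hS.isoPullback.hom, IsPullback.isoPullback_hom_fst_assoc,
        IsPullback.isoPullback_hom_snd_assoc, s.condition])
  choose desc hX hY using hdesc
  exact ⟨⟨hS.w⟩, ⟨PushoutCocone.IsColimit.mk _ desc hX hY fun s m hm₁ hm₂ ↦
    h.hom_ext (hm₁.trans (hX s).symm) (hm₂.trans (hY s).symm)⟩⟩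

end IsSchemeTheoreticUnion

end AlgebraicGeometry

/-- Universal property of the nodal gluing: let `Z` be the nodal gluing of the
`S`-schemes `X` and `Y` along sections `σX : S ⟶ X`, `σY : S ⟶ Y`; that is, `X` and `Y`
are closed subschemes of `Z` with `X ∪ Y = Z` scheme-theoretically (topological
covering together with injectivity of `O_Z → i_{X*}O_X ⊕ i_{Y*}O_Y`) and with
scheme-theoretic intersection `X ∩ Y = σ(S)` (the `IsPullback` hypothesis).  Then `Z`
is the pushout of `X ⟵ S ⟶ Y`: giving a morphism `Z ⟶ Z'` is the same as giving
morphisms `X ⟶ Z'` and `Y ⟶ Z'` agreeing after composition with `σX` and `σY`. -/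
theorem nodal_gluing_isPushout
    (S X Y Z : Scheme)
    (σX : S ⟶ X) (σY : S ⟶ Y) (iX : X ⟶ Z) (iY : Y ⟶ Z)
    [IsClosedImmersion iX] [IsClosedImmersion iY]
    -- scheme-theoretic intersection `X ∩ Y = σ(S)` :
    (hinter : IsPullback σX σY iX iY)
    -- scheme-theoretic union `X ∪ Y = Z` :
    (hcover : ∀ z : Z, (∃ x : X, iX.base x = z) ∨ (∃ y : Y, iY.base y = z))
    (hsheaf : ∀ U : Z.Opens,
      Function.Injective (fun s : Γ(Z, U) => ((iX.app U) s, (iY.app U) s))) :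
    IsPushout σX σY iX iY :=
  IsSchemeTheoreticUnion.isPushout ⟨hcover, hsheaf⟩ hinter
end

section
/- Let λ_{ij} be a cylindrical growth diagram on the diagonal strip D = {(i,j) : 0 ≤ i+j ≤ r}, with main-diagonal labels ∅ and outer-diagonal labels the k×(n−k) rectangle. Then λ_{(i+r)(j−r)} = λ_{ij} for all (i,j), i.e. the rows of the diagram repeat with period r. -/
/-- `β` is obtained from `α` by adding a single box. -/
def OneBox (α β : YoungDiagram) : Prop := α ≤ β ∧ β.cells.card = α.cells.card + 1

/-- Two cells are adjacent if they share an edge. -/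
def AdjCell (c d : ℕ × ℕ) : Prop :=
  (c.1 = d.1 ∧ (c.2 + 1 = d.2 ∨ d.2 + 1 = c.2)) ∨
  (c.2 = d.2 ∧ (c.1 + 1 = d.1 ∨ d.1 + 1 = c.1))

/-- The local recurrence condition of growth diagrams for a square with corners
`γ ⊆ α, δ ⊆ β`: if the two boxes of `β/γ` are nonadjacent then `α` and `δ` are the
two distinct intermediate partitions between `γ` and `β`. -/
def GrowthSq (γ α δ β : YoungDiagram) : Prop :=
  (∃ c ∈ β.cells, ∃ d ∈ β.cells, c ∉ γ.cells ∧ d ∉ γ.cells ∧ c ≠ d ∧ ¬ AdjCell c d) → α ≠ δ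

/-- The `k × m` rectangular Young diagram. -/
def rectYD (k m : ℕ) : YoungDiagram :=
  ⟨Finset.range k ×ˢ Finset.range m, by
    intro a b hab hb
    simp only [Finset.coe_product, Set.mem_prod, Finset.mem_coe, Finset.mem_range] at hb ⊢
    exact ⟨lt_of_le_of_lt hab.1 hb.1, lt_of_le_of_lt hab.2 hb.2⟩⟩


/-- A cylindrical growth diagram on the diagonal strip `D = {(i,j) : 0 ≤ i+j ≤ r}`:
vertices are labeled by partitions, each edge of the grid adds one box, each unit
square satisfies the growth-diagram recurrence, the main diagonal is labeled by the
empty partition and the outer diagonal by the `k × m` rectangle. -/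
def IsCylGrowth (r k m : ℕ) (L : ℤ → ℤ → YoungDiagram) : Prop :=
  (∀ i j : ℤ, 0 ≤ i + j → i + j + 1 ≤ r → OneBox (L i j) (L (i + 1) j)) ∧
  (∀ i j : ℤ, 0 ≤ i + j → i + j + 1 ≤ r → OneBox (L i j) (L i (j + 1))) ∧
  (∀ i j : ℤ, 0 ≤ i + j → i + j + 2 ≤ r →
    GrowthSq (L i j) (L i (j + 1)) (L (i + 1) j) (L (i + 1) (j + 1))) ∧
  (∀ i : ℤ, L i (-i) = ⊥) ∧
  (∀ i : ℤ, L i ((r : ℤ) - i) = rectYD k m)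

theorem youngDiagram_ext_rowLen {α β : YoungDiagram} (h : ∀ x, α.rowLen x = β.rowLen x) :
    α = β := by
  apply YoungDiagram.ext
  ext ⟨x, y⟩
  rw [YoungDiagram.mem_cells, YoungDiagram.mem_cells, YoungDiagram.mem_iff_lt_rowLen,
    YoungDiagram.mem_iff_lt_rowLen, h]

theorem rowLen_bot (x : ℕ) : (⊥ : YoungDiagram).rowLen x = 0 := by
  rw [YoungDiagram.rowLen_eq_card, Finset.card_eq_zero]
  ext c
  simp [YoungDiagram.mem_row_iff]

theorem rowLen_rectYD (k m x : ℕ) : (rectYD k m).rowLen x = if x < k then m else 0 := by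
  have key : ∀ y, y < (rectYD k m).rowLen x ↔ x < k ∧ y < m := by
    intro y
    rw [← YoungDiagram.mem_iff_lt_rowLen, ← YoungDiagram.mem_cells]
    simp [rectYD]
  have h1 := key ((rectYD k m).rowLen x)
  have h2 := key m
  have h3 := key 0
  have h4 := key (m - 1)
  split_ifs <;> grind

/-- Adding one box increases exactly one row length, by one. -/
theorem OneBox.exists_row {α β : YoungDiagram} (h : OneBox α β) :
    ∃ a, ∀ x, β.rowLen x = α.rowLen x + if x = a then 1 else 0 := by
  obtain ⟨hle, hc⟩ := h
  have hsub : α.cells ⊆ β.cells := hle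
  have h1 : (β.cells \ α.cells).card = 1 := by
    rw [Finset.card_sdiff_of_subset hsub]; omega
  obtain ⟨⟨a, b⟩, hab⟩ := Finset.card_eq_one.1 h1
  have hins : β.cells = insert (a, b) α.cells := by
    rw [← Finset.sdiff_union_of_subset hsub, hab]; rfl
  have hnot : (a, b) ∉ α.cells := by
    have : (a, b) ∈ β.cells \ α.cells := by rw [hab]; simp
    exact (Finset.mem_sdiff.1 this).2
  refine ⟨a, fun x => ?_⟩
  rw [YoungDiagram.rowLen_eq_card, YoungDiagram.rowLen_eq_card]
  unfold YoungDiagram.row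
  rw [hins, Finset.filter_insert]
  by_cases hx : x = a
  · subst hx
    simp [hnot]
  · simp [hx, Ne.symm hx]

/-- The local rule in terms of the rows receiving boxes: passing from the larger to the smaller
side of a square, the row index is kept, or drops by one from a row that has just become as long
as the one above it. -/
theorem GrowthSq.row_eq_or {γ γ' α α' : YoungDiagram} (h : GrowthSq γ γ' α α') {a a' c c' : ℕ}
    (ha : ∀ x, α'.rowLen x = α.rowLen x + if x = a then 1 else 0)
    (ha' : ∀ x, γ'.rowLen x = γ.rowLen x + if x = a' then 1 else 0)
    (hc : ∀ x, α.rowLen x = γ.rowLen x + if x = c then 1 else 0)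
    (hc' : ∀ x, α'.rowLen x = γ'.rowLen x + if x = c' then 1 else 0) :
    a' = a ∨ (a = a' + 1 ∧ α'.rowLen a' = α'.rowLen (a' + 1)) := by
  by_cases hne : a' = a
  · exact Or.inl hne
  right
  have e1 := ha a
  have e2 := ha' a
  have e3 := hc a
  have e4 := hc' a
  have f1 := ha a'
  have f2 := ha' a'
  have f3 := hc a'
  have f4 := hc' a'
  have hca : c = a' := by grind
  subst hca
  have hγα : γ' = α := youngDiagram_ext_rowLen fun x => by rw [ha', hc]
  have hadj : AdjCell (c, γ.rowLen c) (a, γ.rowLen a) := by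
    by_contra hcon
    refine h ⟨(c, γ.rowLen c), ?_, (a, γ.rowLen a), ?_, ?_, ?_, ?_, hcon⟩ hγα
    · rw [YoungDiagram.mem_cells, YoungDiagram.mem_iff_lt_rowLen]; grind
    · rw [YoungDiagram.mem_cells, YoungDiagram.mem_iff_lt_rowLen]; grind
    · rw [YoungDiagram.mem_cells, YoungDiagram.mem_iff_lt_rowLen]; grind
    · rw [YoungDiagram.mem_cells, YoungDiagram.mem_iff_lt_rowLen]; grind
    · intro hh; exact hne (Prod.ext_iff.1 hh).1
  rcases hadj with ⟨h1, _⟩ | ⟨h1, h2⟩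
  · exact absurd h1 hne
  · have hanti : α.rowLen (a + 1) ≤ α.rowLen a := α.rowLen_anti _ _ (Nat.le_succ a)
    simp only at h1 h2
    rcases h2 with h2 | h2
    · subst h2
      refine ⟨rfl, ?_⟩
      grind
    · subst h2
      grind

/-- `A` is a union of `p` weakly decreasing subsequences of the word `w`, the function `f`
telling them apart. -/
def IsDecreasingUnion (p : ℕ) (w : ℕ → ℕ) (A : Finset ℕ) (f : ℕ → ℕ) : Prop :=
  (∀ s ∈ A, f s < p) ∧ ∀ s ∈ A, ∀ t ∈ A, s < t → f s = f t → w t ≤ w s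

/-- Some `N` letters among the first `n` letters of `w` form a union of `p` weakly decreasing
subsequences. -/
def HasDecreasingUnion (p n : ℕ) (w : ℕ → ℕ) (N : ℕ) : Prop :=
  ∃ A ⊆ Finset.range n, ∃ f, IsDecreasingUnion p w A f ∧ N ≤ A.card

theorem HasDecreasingUnion.congr {p n N : ℕ} {w w' : ℕ → ℕ} (h : HasDecreasingUnion p n w N)
    (hw : ∀ s < n, w s = w' s) : HasDecreasingUnion p n w' N := by
  obtain ⟨A, hA, f, ⟨h1, h2⟩, hN⟩ := h
  refine ⟨A, hA, f, ⟨h1, fun s hs t ht hst hf => ?_⟩, hN⟩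
  rw [← hw s (Finset.mem_range.1 (hA hs)), ← hw t (Finset.mem_range.1 (hA ht))]
  exact h2 s hs t ht hst hf

/-- Lowering a letter `i + 1` to `i` does not destroy unions of weakly decreasing subsequences,
provided that in every stretch following it there are at least as many `i` as `i + 1`. -/
theorem HasDecreasingUnion.update {p n N : ℕ} {w : ℕ → ℕ} (h : HasDecreasingUnion p n w N)
    {t i : ℕ} (hwt : w t = i + 1)
    (hS : ∀ u ≤ n, ((Finset.Ioo t u).filter (fun v => w v = i + 1)).card ≤
      ((Finset.Ioo t u).filter (fun v => w v = i)).card) :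
    HasDecreasingUnion p n (Function.update w t i) N := by
  obtain ⟨A, hA, f, ⟨h1, h2⟩, hN⟩ := h
  have hAn : ∀ s ∈ A, s < n := fun s hs => Finset.mem_range.1 (hA hs)
  by_cases htA : t ∈ A
  swap
  · refine ⟨A, hA, f, ⟨h1, fun s hs u hu hsu hf => ?_⟩, hN⟩
    rw [Function.update_of_ne (by grind), Function.update_of_ne (by grind)]
    exact h2 s hs u hu hsu hf
  obtain ⟨τ, d, hτn, htτ, hd, hτmin, hτi, hdc⟩ : ∃ τ d, τ ≤ n ∧ t < τ ∧ d < p ∧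
      (∀ s ∈ A, t < s → s < τ → w s ≠ i ∧ (f s = f t → w s = i + 1)) ∧
      (∀ s ∈ A, τ ≤ s → f s = d → w s ≤ i) ∧
      (d = f t ∨ (τ ∈ A ∧ f τ = d ∧ w τ = i)) := by
    by_cases hX : ∃ s, s ∈ A ∧ t < s ∧ (w s = i ∨ (f s = f t ∧ w s ≤ i))
    · classical
      have hm : ∀ s < Nat.find hX, _ := fun s hs => Nat.find_min hX hs
      obtain ⟨g1, g2, g3⟩ := Nat.find_spec hX
      generalize Nat.find hX = τ at *
      refine ⟨τ, f τ, (hAn _ g1).le, g2, h1 _ g1, ?_, ?_, ?_⟩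
      · intro s hs hts hsτ
        have := hm s hsτ
        have h3 := h2 t htA s hs hts
        grind
      · intro s hs hs' hfs
        rcases hs'.eq_or_lt with rfl | hlt
        · grind
        · have := h2 τ g1 s hs hlt hfs.symm
          grind
      · grind
    · refine ⟨n, f t, le_rfl, hAn _ htA, h1 _ htA, ?_, ?_, Or.inl rfl⟩
      · intro s hs hts hsτ
        have h3 := h2 t htA s hs hts
        grind
      · intro s hs hs'
        have := hAn s hs
        omega
  by_cases hcase : d ≠ f t ∧ ∃ s ∈ A, s < t ∧ f s = d ∧ w s = i
  · obtain ⟨hdne, s0, hs0, hs0t, hfs0, hws0⟩ := hcase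
    obtain ⟨hτA, hfτ, hwτ⟩ := hdc.resolve_left hdne
    refine ⟨A, hA, Function.update f t d, ⟨?_, ?_⟩, hN⟩
    · intro s hs
      by_cases hst : s = t
      · subst hst; simpa using hd
      · rw [Function.update_of_ne hst]; exact h1 s hs
    · intro s hs u hu hsu hf
      by_cases hst : s = t
      · subst hst
        rw [Function.update_self, Function.update_of_ne (by omega)] at hf
        rw [Function.update_self, Function.update_of_ne (by omega)]
        have := h2 s0 hs0 u hu (by omega) (by omega)
        omega
      · by_cases hut : u = t
        · subst hut
          rw [Function.update_self, Function.update_of_ne hst] at hf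
          rw [Function.update_self, Function.update_of_ne hst]
          have := h2 s hs τ hτA (by omega) (by omega)
          omega
        · rw [Function.update_of_ne hst, Function.update_of_ne hut] at hf ⊢
          exact h2 s hs u hu hsu hf
  set R := A.filter (fun s => t < s ∧ s < τ ∧ f s = f t) with hR
  set D := (Finset.Ioo t τ).filter (fun v => w v = i) with hD
  have hRD : R.card ≤ D.card := by
    refine le_trans (Finset.card_le_card ?_) (hS τ hτn)
    intro s hs
    simp only [hR, Finset.mem_filter, Finset.mem_Ioo] at hs ⊢
    exact ⟨⟨hs.2.1, hs.2.2.1⟩, (hτmin s hs.1 hs.2.1 hs.2.2.1).2 hs.2.2.2⟩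
  have hmemR : ∀ s, s ∈ R ↔ s ∈ A ∧ t < s ∧ s < τ ∧ f s = f t := by simp [hR]
  have hmemD : ∀ s, s ∈ D ↔ (t < s ∧ s < τ) ∧ w s = i := by simp [hD]
  have hdisj : Disjoint (A \ R) D := by
    rw [Finset.disjoint_left]
    intro s hs hsD
    rw [hmemD] at hsD
    exact (hτmin s (Finset.mem_sdiff.1 hs).1 hsD.1.1 hsD.1.2).1 hsD.2
  let f' : ℕ → ℕ := fun s =>
    if s < τ then (if t < s ∧ w s = i then f t else f s) else Equiv.swap (f t) d (f s)
  have hswap : ∀ x, Equiv.swap (f t) d x = if x = f t then d else if x = d then f t else x :=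
    fun x => Equiv.swap_apply_def _ _ _
  refine ⟨(A \ R) ∪ D, ?_, f', ⟨?_, ?_⟩, ?_⟩
  · intro s hs
    rw [Finset.mem_union, Finset.mem_sdiff, hmemD] at hs
    rw [Finset.mem_range]
    rcases hs with hs | hs
    · exact hAn s hs.1
    · omega
  · intro s hs
    rw [Finset.mem_union, Finset.mem_sdiff, hmemD] at hs
    have := h1 t htA
    have := h1 s
    simp only [f', hswap]
    grind
  · intro s hs u hu hsu hf
    rw [Finset.mem_union, Finset.mem_sdiff, hmemD, hmemR] at hs hu
    simp only [f', hswap] at hf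
    simp only [Function.update_apply]
    have k1 := h2 s
    have k2 := h2 t htA u
    have k5 := hτmin s
    have k6 := hτmin u
    have k7 := hτi u
    by_cases hsτ : s < τ
    · by_cases huτ : u < τ
      · simp only [hsτ, huτ, if_true] at hf
        grind
      · simp only [hsτ, huτ, if_true, if_false] at hf
        push Not at hcase
        have huA : u ∈ A := by
          rcases hu with hu | hu
          · exact hu.1
          · exact absurd hu.1.2 huτ
        have k8 := k2 huA (by omega)
        have k9 := k7 huA (by omega)
        rw [if_neg (show u ≠ t by omega)]
        by_cases hsi : t < s ∧ w s = i
        · rw [if_pos hsi] at hf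
          rw [if_neg (show s ≠ t by omega), hsi.2]
          exact k9 (by grind)
        · have hsA : s ∈ A ∧ ¬(s ∈ A ∧ t < s ∧ s < τ ∧ f s = f t) :=
            hs.resolve_right fun h => hsi ⟨h.1.1, h.2⟩
          rw [if_neg hsi] at hf
          have k10 := k1 hsA.1 u huA hsu
          have k11 := h2 s hsA.1 t htA
          have k12 := k5 hsA.1
          have k13 := h2 s hsA.1 τ
          by_cases e1 : f u = f t
          · rw [if_pos e1] at hf
            have k15 := k8 e1.symm
            by_cases e2 : d = f t
            · have := k10 (by omega)
              have := k9 (by omega)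
              grind
            · have k16 := hdc.resolve_left e2
              have k17 := k13 k16.1 hsτ (by omega)
              have k18 := hcase e2 s hsA.1
              have : s ≠ t := by rintro rfl; exact e2 hf.symm
              rw [if_neg this]
              by_cases hts : t < s
              · have := (k12 hts hsτ).1
                omega
              · have := k18 (by omega) hf
                omega
          · rw [if_neg e1] at hf
            by_cases e2 : f u = d
            · rw [if_pos e2] at hf
              have := k9 e2
              grind
            · rw [if_neg e2] at hf
              have := k10 hf
              grind
    · have huτ : ¬ u < τ := by omega
      simp only [hsτ, huτ, if_false] at hf
      have : f s = f u := by grind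
      grind
  · have hRA : R ⊆ A := Finset.filter_subset _ _
    rw [Finset.card_union_of_disjoint hdisj, Finset.card_sdiff_of_subset hRA]
    have : R.card ≤ A.card := Finset.card_le_card hRA
    omega

/-- The word `w` records a chain `ρ 0, …, ρ n` in which `ρ (s + 1)` arises from `ρ s` by
increasing the entry with index `w s` by one. -/
def IsRowWord (n : ℕ) (ρ : ℕ → ℕ → ℕ) (w : ℕ → ℕ) : Prop :=
  ∀ s < n, ∀ x, ρ (s + 1) x = ρ s x + if x = w s then 1 else 0

theorem IsRowWord.eq_add_card {n : ℕ} {ρ : ℕ → ℕ → ℕ} {w : ℕ → ℕ} (h : IsRowWord n ρ w)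
    {s : ℕ} (x u : ℕ) (hsu : s ≤ u) (hu : u ≤ n) :
    ρ u x = ρ s x + ((Finset.Ico s u).filter (fun v => w v = x)).card := by
  induction u, hsu using Nat.le_induction with
  | base => simp
  | succ u hsu ih =>
    rw [h u (by omega) x, ih (by omega), ← Finset.insert_Ico_right_eq_Ico_add_one hsu,
      Finset.filter_insert]
    by_cases hx : w u = x
    · simp [hx]; omega
    · simp [hx, Ne.symm hx]

/-- One jeu de taquin slide does not destroy unions of weakly decreasing subsequences. -/
theorem HasDecreasingUnion.slide {p n N : ℕ} {ρ : ℕ → ℕ → ℕ} {w w' : ℕ → ℕ}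
    (h : HasDecreasingUnion p n w N) (hρ : IsRowWord n ρ w)
    (hanti : ∀ s ≤ n, Antitone (ρ s))
    (hloc : ∀ s < n, w' s = w s ∨ (w s = w' s + 1 ∧ ρ (s + 1) (w' s) = ρ (s + 1) (w' s + 1))) :
    HasDecreasingUnion p n w' N := by
  have key : ∀ t ≤ n, HasDecreasingUnion p n (fun s => if s < t then w' s else w s) N := by
    intro t
    induction t with
    | zero => intro _; simpa using h
    | succ t ih =>
      intro ht
      have ih := ih (by omega)
      rcases hloc t ht with he | ⟨he, heq⟩
      · exact ih.congr (fun s _ => by grind)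
      · have hupd := ih.update (t := t) (i := w' t) (by simpa using he) ?_
        · exact hupd.congr (fun s _ => by rw [Function.update_apply]; grind)
        · intro u hu
          rcases Nat.lt_or_ge t u with htu | htu
          · have c : ∀ x, (Finset.Ioo t u).filter
                (fun v => (if v < t then w' v else w v) = x) =
                (Finset.Ico (t + 1) u).filter (fun v => w v = x) := by
              intro x
              ext v
              simp only [Finset.mem_filter, Finset.mem_Ioo, Finset.mem_Ico]
              grind
            rw [c, c]
            have e1 := hρ.eq_add_card (w' t) u htu hu
            have e2 := hρ.eq_add_card (w' t + 1) u htu hu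
            have e3 := hanti u hu (Nat.le_succ (w' t))
            simp only [Nat.succ_eq_add_one] at e1 e2 e3
            omega
          · rw [Finset.Ioo_eq_empty (by omega)]; simp
  exact (key n le_rfl).congr (fun s hs => by simp [hs])

/-- For a chain starting at the empty partition, a union of `p` weakly decreasing subsequences
has at most as many letters as the first `p` rows of the final partition have boxes. -/
theorem HasDecreasingUnion.le_sum {p n N : ℕ} {ρ : ℕ → ℕ → ℕ} {w : ℕ → ℕ}
    (h : HasDecreasingUnion p n w N) (hρ : IsRowWord n ρ w)
    (hanti : ∀ s ≤ n, Antitone (ρ s)) (h0 : ∀ x, ρ 0 x = 0) :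
    N ≤ ∑ x ∈ Finset.range p, ρ n x := by
  obtain ⟨A, hA, f, ⟨h1, h2⟩, hN⟩ := h
  have hAn : ∀ s ∈ A, s < n := fun s hs => Finset.mem_range.1 (hA hs)
  have hmono : ∀ x s u, s ≤ u → u ≤ n → ρ s x ≤ ρ u x := fun x s u hsu hu => by
    rw [hρ.eq_add_card x u hsu hu]; omega
  have hstep : ∀ s u, s < u → u ≤ n → ρ s (w s) + 1 ≤ ρ u (w s) := fun s u hsu hu => by
    have := hρ s (by omega) (w s)
    have := hmono (w s) (s + 1) u hsu hu
    grind
  have hbound : ∀ x, ρ n x ≤ n := fun x => by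
    rw [hρ.eq_add_card x n (Nat.zero_le n) le_rfl, h0, zero_add]
    exact (Finset.card_filter_le _ _).trans (by simp)
  have hcell : ∑ x ∈ Finset.range p, ρ n x =
      ∑ b ∈ Finset.range n, ((Finset.range p).filter (fun x => b < ρ n x)).card := by
    simp_rw [Finset.card_filter]
    rw [Finset.sum_comm]
    refine Finset.sum_congr rfl fun x _ => ?_
    rw [← Finset.card_filter]
    have : (Finset.range n).filter (fun b => b < ρ n x) = Finset.range (ρ n x) := by
      ext b
      have := hbound x
      simp only [Finset.mem_filter, Finset.mem_range]
      omega
    rw [this, Finset.card_range]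
  have hcol : ∀ s ∈ A, ρ s (w s) ∈ Finset.range n := fun s hs => by
    rw [Finset.mem_range]
    have := hstep s n (hAn s hs) le_rfl
    have := hbound (w s)
    omega
  refine hN.trans ?_
  rw [hcell, Finset.card_eq_sum_card_fiberwise hcol]
  refine Finset.sum_le_sum fun b _ => ?_
  have hincr : ∀ s ∈ A, ∀ u ∈ A, s < u → ρ s (w s) = b → ρ u (w u) = b → w s < w u := by
    intro s hs u hu hsu hsb hub
    by_contra hcon
    have g1 := hanti u (hAn u hu).le (not_lt.1 hcon)
    have g2 := hstep s u hsu (hAn u hu).le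
    omega
  by_cases hx : ∃ x0 < p, ρ n x0 ≤ b
  · obtain ⟨x0, hx0, hx0b⟩ := hx
    refine Finset.card_le_card_of_injOn w ?_ ?_
    · intro s hs
      simp only [Finset.coe_filter, Set.mem_ofPred_eq, Finset.mem_range] at hs ⊢
      have g1 := hstep s n (hAn s hs.1) le_rfl
      refine ⟨?_, by omega⟩
      by_contra hcon
      have g2 := hanti n le_rfl (show x0 ≤ w s by omega)
      omega
    · intro s hs u hu hsu
      simp only [Finset.coe_filter, Set.mem_ofPred_eq] at hs hu
      rcases lt_trichotomy s u with hlt | heq | hlt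
      · have := hincr s hs.1 u hu.1 hlt hs.2 hu.2; omega
      · exact heq
      · have := hincr u hu.1 s hs.1 hlt hu.2 hs.2; omega
  · push Not at hx
    refine Finset.card_le_card_of_injOn f ?_ ?_
    · intro s hs
      simp only [Finset.coe_filter, Set.mem_ofPred_eq, Finset.mem_range] at hs ⊢
      exact ⟨h1 s hs.1, hx _ (h1 s hs.1)⟩
    · intro s hs u hu hsu
      simp only [Finset.coe_filter, Set.mem_ofPred_eq] at hs hu
      rcases lt_trichotomy s u with hlt | heq | hlt
      · have := hincr s hs.1 u hu.1 hlt hs.2 hu.2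
        have := h2 s hs.1 u hu.1 hlt hsu
        omega
      · exact heq
      · have := hincr u hu.1 s hs.1 hlt hu.2 hs.2
        have := h2 u hu.1 s hs.1 hlt hsu.symm
        omega

/-- For a chain ending at a rectangle, the letters in the last `p` rows form a union of `p`
constant subsequences. -/
theorem IsRowWord.hasDecreasingUnion {n k m p : ℕ} {ρ : ℕ → ℕ → ℕ} {w : ℕ → ℕ}
    (hρ : IsRowWord n ρ w) (hend : ∀ x, ρ n x = if x < k then m else 0) (hp : p ≤ k) :
    HasDecreasingUnion p n w (p * m - ∑ x ∈ Finset.Ico (k - p) k, ρ 0 x) := by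
  have hcount : ∀ x, ρ n x = ρ 0 x + ((Finset.range n).filter (fun v => w v = x)).card :=
    fun x => by rw [hρ.eq_add_card x n (Nat.zero_le n) le_rfl, Finset.range_eq_Ico]
  have hwk : ∀ s < n, w s < k := by
    intro s hs
    by_contra hcon
    have g1 := hcount (w s)
    rw [hend, if_neg hcon] at g1
    have : s ∈ (Finset.range n).filter (fun v => w v = w s) := by simp [hs]
    have := Finset.card_pos.2 ⟨s, this⟩
    omega
  refine ⟨(Finset.range n).filter (fun s => k - p ≤ w s), Finset.filter_subset _ _,
    fun s => w s - (k - p), ⟨?_, ?_⟩, ?_⟩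
  · intro s hs
    simp only [Finset.mem_filter, Finset.mem_range] at hs
    have := hwk s hs.1
    dsimp only
    omega
  · intro s hs t ht _ hf
    simp only [Finset.mem_filter, Finset.mem_range] at hs ht hf
    omega
  · have hmaps : ∀ s ∈ (Finset.range n).filter (fun s => k - p ≤ w s),
        w s ∈ Finset.Ico (k - p) k := by
      intro s hs
      simp only [Finset.mem_filter, Finset.mem_range, Finset.mem_Ico] at hs ⊢
      exact ⟨hs.2, hwk s hs.1⟩
    rw [Finset.card_eq_sum_card_fiberwise hmaps, tsub_le_iff_right, ← Finset.sum_add_distrib]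
    have : p * m = ∑ x ∈ Finset.Ico (k - p) k, m := by
      rw [Finset.sum_const, Nat.card_Ico, smul_eq_mul]
      congr 1
      omega
    rw [this]
    refine Finset.sum_le_sum fun x hx => ?_
    have hx' := Finset.mem_Ico.1 hx
    have g1 := hcount x
    rw [hend, if_pos hx'.2] at g1
    rw [Finset.filter_filter]
    have : (Finset.range n).filter (fun a => k - p ≤ w a ∧ w a = x) =
        (Finset.range n).filter (fun v => w v = x) := by
      ext v
      simp only [Finset.mem_filter]
      constructor
      · rintro ⟨a, _, b⟩; exact ⟨a, b⟩
      · rintro ⟨a, b⟩; exact ⟨a, by omega, b⟩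
    rw [this]
    omega

theorem IsCylGrowth.swap {r k m : ℕ} {L : ℤ → ℤ → YoungDiagram} (hL : IsCylGrowth r k m L) :
    IsCylGrowth r k m (fun i j => L j i) := by
  obtain ⟨h1, h2, h3, h4, h5⟩ := hL
  refine ⟨fun i j a b => h2 j i (by omega) (by omega), fun i j a b => h1 j i (by omega) (by omega),
    fun i j a b hc => (h3 j i (by omega) (by omega) hc).symm, fun i => ?_, fun i => ?_⟩
  · simpa using h4 (-i)
  · simpa using h5 (r - i)

/-- The label at `(-j, r - i)` dominates the complement of the label at `(i, j)`. -/
theorem IsCylGrowth.dominates {r k m : ℕ} {L : ℤ → ℤ → YoungDiagram} (hL : IsCylGrowth r k m L)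
    {i j : ℤ} (h0 : 0 ≤ i + j) (hr : i + j ≤ r) {p : ℕ} (hp : p ≤ k) :
    p * m ≤ ∑ x ∈ Finset.range p, (L (-j) (r - i)).rowLen x +
      ∑ x ∈ Finset.Ico (k - p) k, (L i j).rowLen x := by
  obtain ⟨hV, hH, hG, hbot, htop⟩ := hL
  obtain ⟨H, hHeq⟩ := Int.eq_ofNat_of_zero_le h0
  obtain ⟨n, hn⟩ := Int.eq_ofNat_of_zero_le (show 0 ≤ (r : ℤ) - (i + j) by omega)
  let ρ : ℕ → ℕ → ℕ → ℕ := fun h s x => (L (-j + h) (j + s)).rowLen x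
  have hanti : ∀ h s, Antitone (ρ h s) := fun h s a b hab => YoungDiagram.rowLen_anti _ _ _ hab
  have hw : ∀ h s, ∃ a, h ≤ H → s < n → ∀ x, ρ h (s + 1) x = ρ h s x + if x = a then 1 else 0 := by
    intro h s
    by_cases hh : h ≤ H ∧ s < n
    · obtain ⟨a, ha⟩ := (hH (-j + h) (j + s) (by omega) (by omega)).exists_row
      refine ⟨a, fun _ _ x => ?_⟩
      simpa [ρ, add_assoc] using ha x
    · exact ⟨0, fun a b => absurd ⟨a, b⟩ hh⟩
  choose w hw using hw
  have hword : ∀ h ≤ H, IsRowWord n (ρ h) (w h) := fun h hh s hs => hw h s hh hs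
  have htopw : HasDecreasingUnion p n (w H) (p * m - ∑ x ∈ Finset.Ico (k - p) k, ρ H 0 x) := by
    refine (hword H le_rfl).hasDecreasingUnion (fun x => ?_) hp
    have e1 : -j + (H : ℤ) = i := by omega
    have e2 : j + (n : ℤ) = r - i := by omega
    simp only [ρ, e1, e2, htop, rowLen_rectYD]
  have hdown : ∀ h ≤ H, HasDecreasingUnion p n (w (H - h))
      (p * m - ∑ x ∈ Finset.Ico (k - p) k, ρ H 0 x) := by
    intro h
    induction h with
    | zero => intro _; simpa using htopw
    | succ h ih =>
      intro hh
      obtain ⟨g, hg⟩ : ∃ g, H - h = g + 1 := ⟨H - h - 1, by omega⟩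
      have hg' : H - (h + 1) = g := by omega
      have ih := ih (by omega)
      rw [hg] at ih
      rw [hg']
      refine ih.slide (hword (g + 1) (by omega)) (fun s _ => hanti _ s) (fun s hs => ?_)
      have hsq := hG (-j + g) (j + s) (by omega) (by omega)
      obtain ⟨c, hc⟩ := (hV (-j + g) (j + s) (by omega) (by omega)).exists_row
      obtain ⟨c', hc'⟩ := (hV (-j + g) (j + s + 1) (by omega) (by omega)).exists_row
      have key := hsq.row_eq_or (a := w (g + 1) s) (a' := w g s) (fun x => ?_) (fun x => ?_) hc hc'
      · simpa [ρ, add_assoc] using key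
      · simpa [ρ, add_assoc] using hw (g + 1) s (by omega) hs x
      · simpa [ρ, add_assoc] using hw g s (by omega) hs x
  have hfin := hdown H le_rfl
  rw [Nat.sub_self] at hfin
  have hle := hfin.le_sum (hword 0 (Nat.zero_le _)) (fun s _ => hanti 0 s) (fun x => by
    have e : L (-j) j = ⊥ := by simpa using hbot (-j)
    simp [ρ, e, rowLen_bot])
  have e1 : -j + (H : ℤ) = i := by omega
  have e2 : j + (n : ℤ) = r - i := by omega
  simp only [ρ, e1, e2, Nat.cast_zero, add_zero] at hle
  omega

theorem IsCylGrowth.rowLen_eq_zero {r k m : ℕ} {L : ℤ → ℤ → YoungDiagram}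
    (hL : IsCylGrowth r k m L) {i j : ℤ} (h0 : 0 ≤ i + j) (hr : i + j ≤ r) {x : ℕ} (hx : k ≤ x) :
    (L i j).rowLen x = 0 := by
  obtain ⟨n, hn⟩ := Int.eq_ofNat_of_zero_le (show 0 ≤ (r : ℤ) - (i + j) by omega)
  induction n generalizing j with
  | zero =>
    have e : j = r - i := by omega
    rw [e, hL.2.2.2.2, rowLen_rectYD, if_neg (by omega)]
  | succ n ih =>
    obtain ⟨a, ha⟩ := (hL.2.1 i j h0 (by omega)).exists_row
    have := ih (j := j + 1) (by omega) (by omega) (by omega)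
    have := ha x
    omega

theorem IsCylGrowth.sum_rowLen {r k m : ℕ} {L : ℤ → ℤ → YoungDiagram}
    (hL : IsCylGrowth r k m L) {i j : ℤ} (h0 : 0 ≤ i + j) (hr : i + j ≤ r) :
    (∑ x ∈ Finset.range k, (L i j).rowLen x : ℕ) = i + j := by
  obtain ⟨n, hn⟩ := Int.eq_ofNat_of_zero_le h0
  induction n generalizing j with
  | zero =>
    have e : j = -i := by omega
    rw [e, hL.2.2.2.1]
    simp [rowLen_bot]
  | succ n ih =>
    obtain ⟨a, ha⟩ := (hL.2.1 i (j - 1) (by omega) (by omega)).exists_row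
    rw [sub_add_cancel] at ha
    have ih := ih (j := j - 1) (by omega) (by omega) (by omega)
    have hak : a < k := by
      by_contra hcon
      have g1 := hL.rowLen_eq_zero h0 hr (not_lt.1 hcon)
      have g2 := ha a
      simp only [if_true] at g2
      omega
    simp_rw [ha, Finset.sum_add_distrib, Finset.sum_ite_eq', Finset.mem_range, if_pos hak]
    push_cast at ih ⊢
    omega

/-- The labels at `(i, j)` and `(r - j, -i)` are complementary in the rectangle, in terms of
partial sums of row lengths. -/
theorem IsCylGrowth.sum_add_sum {r k m : ℕ} {L : ℤ → ℤ → YoungDiagram} (hrk : r = k * m)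
    (hL : IsCylGrowth r k m L) {i j : ℤ} (h0 : 0 ≤ i + j) (hr : i + j ≤ r) {p : ℕ} (hp : p ≤ k) :
    ∑ x ∈ Finset.range p, (L i j).rowLen x +
      ∑ x ∈ Finset.Ico (k - p) k, (L (r - j) (-i)).rowLen x = p * m := by
  have d1 := hL.dominates (i := r - j) (j := -i) (by omega) (by omega) hp
  have d2 := hL.swap.dominates (i := j) (j := i) (by omega) (by omega) (Nat.sub_le k p)
  have s1 := hL.sum_rowLen h0 hr
  have s2 := hL.sum_rowLen (i := r - j) (j := -i) (by omega) (by omega)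
  simp only [neg_neg, sub_sub_cancel, Nat.sub_sub_self hp] at d1 d2
  rw [← Finset.sum_range_add_sum_Ico _ hp] at s1
  rw [← Finset.sum_range_add_sum_Ico _ (Nat.sub_le k p)] at s2
  have e : (k - p) * m + p * m = r := by
    rw [hrk, ← add_mul, Nat.sub_add_cancel hp]
  push_cast at s1 s2
  zify at d1 d2 e ⊢
  linarith

/-- The rows of a cylindrical growth diagram repeat with period `r`:
`λ_{(i+r)(j−r)} = λ_{ij}`. -/
theorem cylindrical_growth_periodicity
    (r k m : ℕ) (hr : r = k * m) (L : ℤ → ℤ → YoungDiagram)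
    (hL : IsCylGrowth r k m L) :
    ∀ i j : ℤ, 0 ≤ i + j → i + j ≤ r → L (i + r) (j - r) = L i j := by
  intro i j h0 h1
  have hpart : ∀ p ≤ k, ∑ x ∈ Finset.range p, (L (i + r) (j - r)).rowLen x =
      ∑ x ∈ Finset.range p, (L i j).rowLen x := by
    intro p hp
    have c1 := hL.sum_add_sum hr h0 h1 hp
    have c2 := hL.sum_add_sum hr (i := r - j) (j := -i) (by omega) (by omega) (Nat.sub_le k p)
    have s1 := hL.sum_rowLen (i := r - j) (j := -i) (by omega) (by omega)
    have s2 := hL.sum_rowLen (i := i + r) (j := j - r) (by omega) (by omega)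
    have e1 : (r : ℤ) - -i = i + r := by ring
    have e2 : -((r : ℤ) - j) = j - r := by ring
    rw [e1, e2, Nat.sub_sub_self hp] at c2
    rw [← Finset.sum_range_add_sum_Ico _ (Nat.sub_le k p)] at s1
    rw [← Finset.sum_range_add_sum_Ico _ hp] at s2
    have e : (k - p) * m + p * m = r := by
      rw [hr, ← add_mul, Nat.sub_add_cancel hp]
    push_cast at s1 s2
    zify at c1 c2 e ⊢
    linarith
  refine youngDiagram_ext_rowLen fun x => ?_
  rcases Nat.lt_or_ge x k with hx | hx
  · have g1 := hpart x hx.le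
    have g2 := hpart (x + 1) hx
    rw [Finset.sum_range_succ, Finset.sum_range_succ] at g2
    omega
  · rw [hL.rowLen_eq_zero h0 h1 hx, hL.rowLen_eq_zero (by omega) (by omega) hx]
end

section
/- Any two standard Young tableaux of the same straight shape λ are dual equivalent. -/
/-- A chain of partitions of length `m`, each step adding one box
(the chain encoding of a skew standard Young tableau). -/
def IsChain' (m : ℕ) (S : ℕ → YoungDiagram) : Prop := ∀ i, i < m → OneBox (S i) (S (i + 1))

/-- A growth diagram on the rectangle `[0,t] × [0,s]`. -/
def IsGrowth (t s : ℕ) (L : ℕ → ℕ → YoungDiagram) : Prop :=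
  (∀ i j, i < t → j ≤ s → OneBox (L i j) (L (i + 1) j)) ∧
  (∀ i j, i ≤ t → j < s → OneBox (L i j) (L i (j + 1))) ∧
  (∀ i j, i < t → j < s → GrowthSq (L i j) (L i (j + 1)) (L (i + 1) j) (L (i + 1) (j + 1)))

/-- `(S, T)` shuffles to `(T', S')`: there is a growth diagram on `[0,t] × [0,s]` whose
left edge is the chain `S` (length `s`), top edge is `T` (length `t`), bottom edge is `T'`
and right edge is `S'`.  This encodes the jeu de taquin shuffle of a pair of skew
standard tableaux. -/
def ShufflesTo (s t : ℕ) (S T T' S' : ℕ → YoungDiagram) : Prop :=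
  ∃ L, IsGrowth t s L ∧ (∀ j, j ≤ s → L 0 j = S j) ∧ (∀ i, i ≤ t → L i s = T i) ∧
    (∀ i, i ≤ t → L i 0 = T' i) ∧ (∀ j, j ≤ s → L t j = S' j)

/-- `R` is the rectification of the chain (skew tableau) `T`: shuffling some straight-shape
chain `A` with `T` produces the straight-shape chain `R`. -/
def Rectifies (m : ℕ) (T R : ℕ → YoungDiagram) : Prop :=
  R 0 = ⊥ ∧ ∃ s A A', A 0 = ⊥ ∧ ShufflesTo s m A T R A'

/-- Dual equivalence of two chains (skew standard tableaux) of length `m`: they have the same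
shape, and shuffling any other tableau through them gives identical results. -/
def DualEquiv (m : ℕ) (S S' : ℕ → YoungDiagram) : Prop :=
  S 0 = S' 0 ∧ S m = S' m ∧
  (∀ t T A B A' B', ShufflesTo m t S T A B → ShufflesTo m t S' T A' B' →
    ∀ i, i ≤ t → A i = A' i) ∧
  (∀ t T A B A' B', ShufflesTo t m T S A B → ShufflesTo t m T S' A' B' →
    ∀ i, i ≤ t → B i = B' i)


/-- `β` is obtained from `α` by adding a single box of content `c`. -/
def BoxStep (α : YoungDiagram) (c : ℤ) (β : YoungDiagram) : Prop :=
  ∃ i j : ℕ, (i, j) ∉ α ∧ (∀ a b : ℕ, (a, b) ∈ β ↔ (a, b) ∈ α ∨ (a = i ∧ b = j)) ∧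
    (j : ℤ) - i = c

theorem OneBox.exists_boxStep {α β : YoungDiagram} (h : OneBox α β) : ∃ c, BoxStep α c β := by
  obtain ⟨hle, hcard⟩ := h
  have hsub : α.cells ⊆ β.cells := hle
  have h1 : (β.cells \ α.cells).card = 1 := by
    rw [Finset.card_sdiff_of_subset hsub]; omega
  obtain ⟨⟨i, j⟩, hx⟩ := Finset.card_eq_one.mp h1
  have key : ∀ a b : ℕ, ((a, b) ∈ β ∧ (a, b) ∉ α) ↔ (a = i ∧ b = j) := by
    intro a b
    have := Finset.ext_iff.mp hx (a, b)
    simpa using this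
  refine ⟨_, i, j, ((key i j).2 ⟨rfl, rfl⟩).2, fun a b => ?_, rfl⟩
  have hab : (a, b) ∈ α → (a, b) ∈ β := fun h => hle h
  have := key a b
  tauto

theorem BoxStep.oneBox {α β : YoungDiagram} {c : ℤ} (h : BoxStep α c β) : OneBox α β := by
  obtain ⟨i, j, hn, hm, -⟩ := h
  have hcells : β.cells = insert (i, j) α.cells := by
    ext ⟨a, b⟩
    simpa [or_comm] using hm a b
  refine ⟨?_, ?_⟩
  · rintro ⟨a, b⟩ hab
    exact (hm a b).2 (Or.inl hab)
  · rw [hcells, Finset.card_insert_of_notMem (by simpa using hn)]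

theorem YoungDiagram.ext_mem {α β : YoungDiagram}
    (h : ∀ a b : ℕ, (a, b) ∈ α ↔ (a, b) ∈ β) : α = β := by
  ext ⟨a, b⟩
  simpa using h a b

theorem BoxStep.right_unique {α β β' : YoungDiagram} {c : ℤ} (h : BoxStep α c β)
    (h' : BoxStep α c β') : β = β' := by
  obtain ⟨i, j, hn, hm, hc⟩ := h
  obtain ⟨i', j', hn', hm', hc'⟩ := h'
  have e : i = i' := by
    rcases lt_trichotomy i i' with hlt | heq | hlt
    · have := β'.up_left_mem hlt.le (show j ≤ j' by omega) ((hm' i' j').2 (Or.inr ⟨rfl, rfl⟩))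
      rcases (hm' i j).1 this with h | h
      · exact absurd h hn
      · omega
    · exact heq
    · have := β.up_left_mem hlt.le (show j' ≤ j by omega) ((hm i j).2 (Or.inr ⟨rfl, rfl⟩))
      rcases (hm i' j').1 this with h | h
      · exact absurd h hn'
      · omega
  have e' : j = j' := by omega
  subst e e'
  exact YoungDiagram.ext_mem fun a b => (hm a b).trans (hm' a b).symm

theorem BoxStep.left_unique {α α' β : YoungDiagram} {c : ℤ} (h : BoxStep α c β)
    (h' : BoxStep α' c β) : α = α' := by
  obtain ⟨i, j, hn, hm, hc⟩ := h
  obtain ⟨i', j', hn', hm', hc'⟩ := h'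
  have e : i = i' := by
    rcases lt_trichotomy i i' with hlt | heq | hlt
    · rcases (hm i' j').1 ((hm' i' j').2 (Or.inr ⟨rfl, rfl⟩)) with h | h
      · exact absurd (α.up_left_mem hlt.le (show j ≤ j' by omega) h) hn
      · omega
    · exact heq
    · rcases (hm' i j).1 ((hm i j).2 (Or.inr ⟨rfl, rfl⟩)) with h | h
      · exact absurd (α'.up_left_mem hlt.le (show j' ≤ j by omega) h) hn'
      · omega
  have e' : j = j' := by omega
  subst e e'
  refine YoungDiagram.ext_mem fun a b => ?_
  have h1 := hm a b
  have h2 := hm' a b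
  by_cases hab : a = i ∧ b = j
  · obtain ⟨rfl, rfl⟩ := hab
    tauto
  · tauto

/-- Two boxes that can both be added to a diagram do not lie on consecutive diagonals. -/
theorem BoxStep.not_succ {α β β' : YoungDiagram} {c : ℤ} (h : BoxStep α c β)
    (h' : BoxStep α (c + 1) β') : False := by
  obtain ⟨i, j, hn, hm, hc⟩ := h
  obtain ⟨i', j', hn', hm', hc'⟩ := h'
  rcases le_or_gt i i' with hlt | hlt
  · have := β'.up_left_mem hlt (show j ≤ j' by omega) ((hm' i' j').2 (Or.inr ⟨rfl, rfl⟩))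
    rcases (hm' i j).1 this with h | h
    · exact absurd h hn
    · omega
  · have := β.up_left_mem hlt.le (show j' ≤ j by omega) ((hm i j).2 (Or.inr ⟨rfl, rfl⟩))
    rcases (hm i' j').1 this with h | h
    · exact absurd h hn'
    · omega

/-- Boxes added in two consecutive steps lie on different diagonals. -/
theorem BoxStep.content_ne {α β γ : YoungDiagram} {p q : ℤ} (h : BoxStep α p β)
    (h' : BoxStep β q γ) : p ≠ q := by
  rintro rfl
  obtain ⟨i, j, hn, hm, hc⟩ := h
  obtain ⟨i', j', hn', hm', hc'⟩ := h'
  rcases le_or_gt i' i with hlt | hlt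
  · exact hn' (β.up_left_mem hlt (show j' ≤ j by omega) ((hm i j).2 (Or.inr ⟨rfl, rfl⟩)))
  · have h1 := γ.up_left_mem hlt.le le_rfl ((hm' i' j').2 (Or.inr ⟨rfl, rfl⟩))
    rcases (hm' i j').1 h1 with h | h
    · rcases (hm i j').1 h with h | h
      · exact hn (α.up_left_mem le_rfl (show j ≤ j' by omega) h)
      · omega
    · omega

/-- Between two boxes added on one diagonal, boxes are added on both neighbouring diagonals. -/
theorem BoxStep.content_ne_of_three {α β γ δ : YoungDiagram} {p q r : ℤ} (h₁ : BoxStep α p β)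
    (h₂ : BoxStep β q γ) (h₃ : BoxStep γ r δ) : p ≠ r := by
  rintro rfl
  obtain ⟨i, j, hn, hm, hc⟩ := h₁
  obtain ⟨a, b, hn', hm', hc'⟩ := h₂
  obtain ⟨i', j', hn'', hm'', hc''⟩ := h₃
  have hij : (i, j) ∈ γ := (hm' i j).2 (Or.inl ((hm i j).2 (Or.inr ⟨rfl, rfl⟩)))
  rcases le_or_gt i' i with hlt | hlt
  · exact hn'' (γ.up_left_mem hlt (show j' ≤ j by omega) hij)
  · have hz := (hm'' i' j').2 (Or.inr ⟨rfl, rfl⟩)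
    have aux : ∀ u v : ℕ, i ≤ u → j ≤ v → u ≤ i' → v ≤ j' → ¬ (u = i ∧ v = j) →
        ¬ (u = i' ∧ v = j') → u = a ∧ v = b := by
      intro u v h1 h2 h3 h4 h5 h6
      have := δ.up_left_mem h3 h4 hz
      rcases (hm'' u v).1 this with h | h
      · rcases (hm' u v).1 h with h | h
        · rcases (hm u v).1 h with h | h
          · exact absurd (α.up_left_mem h1 h2 h) hn
          · exact absurd h h5
        · exact h
      · exact absurd h h6
    have h1 := aux (i + 1) j (by omega) (by omega) (by omega) (by omega) (by omega) (by omega)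
    have h2 := aux i (j + 1) (by omega) (by omega) (by omega) (by omega) (by omega) (by omega)
    omega

/-- The growth rule in terms of contents: the box of content `x` slides past the box of
content `p` unless these contents are consecutive. -/
def ContentSlide (p x y q : ℤ) : Prop :=
  ((p = x + 1 ∨ x = p + 1) ∧ y = p ∧ q = x) ∨ ((p + 2 ≤ x ∨ x + 2 ≤ p) ∧ y = x ∧ q = p)

theorem GrowthSq.contentSlide {α β δ γ : YoungDiagram} {p x y q : ℤ} (h : GrowthSq α β δ γ)
    (hp : BoxStep α p β) (hx : BoxStep β x γ) (hy : BoxStep α y δ) (hq : BoxStep δ q γ) :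
    ContentSlide p x y q := by
  have hne := hp.content_ne hx
  have hsucc : ¬ (y = p + 1) := by rintro rfl; exact hp.not_succ hy
  have hpred : ¬ (p = y + 1) := by rintro rfl; exact hy.not_succ hp
  have hβδ : (p + 2 ≤ x ∨ x + 2 ≤ p) → β ≠ δ := by
    intro hfar
    obtain ⟨i, j, hn, hm, hc⟩ := hp
    obtain ⟨i', j', hn', hm', hc'⟩ := hx
    refine h ⟨(i, j), ?_, (i', j'), ?_, ?_, ?_, ?_, ?_⟩
    · simpa using (hm' i j).2 (Or.inl ((hm i j).2 (Or.inr ⟨rfl, rfl⟩)))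
    · simpa using (hm' i' j').2 (Or.inr ⟨rfl, rfl⟩)
    · simpa using hn
    · simpa using fun h => hn' ((hm i' j').2 (Or.inl h))
    · rintro h
      simp only [Prod.mk.injEq] at h
      omega
    · simp only [AdjCell]
      omega
  have hpy : p = y → β = δ := by rintro rfl; exact hp.right_unique hy
  have hcases : (y = p ∧ q = x) ∨ (y = x ∧ q = p) := by
    obtain ⟨i, j, hn, hm, hc⟩ := hp
    obtain ⟨i', j', hn', hm', hc'⟩ := hx
    obtain ⟨a, b, hn₁, hm₁, hc₁⟩ := hy
    obtain ⟨a', b', hn₁', hm₁', hc₁'⟩ := hq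
    have e : ∀ u v : ℕ, ((u, v) ∈ β ∨ (u = i' ∧ v = j')) ↔ ((u, v) ∈ δ ∨ (u = a' ∧ v = b')) :=
      fun u v => (hm' u v).symm.trans (hm₁' u v)
    simp only [hm, hm₁] at e hn' hn₁'
    have e1 := e i j
    have e2 := e i' j'
    have e3 := e a b
    have e4 := e a' b'
    simp only [and_self, or_true, true_or, true_iff, iff_true, hn, hn₁, false_or, not_or]
      at e1 e2 e3 e4 hn' hn₁'
    simp only [hn', hn₁', false_or] at e2 e4
    omega
  unfold ContentSlide
  by_cases hfar : p + 2 ≤ x ∨ x + 2 ≤ p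
  · have := hβδ hfar
    have : p ≠ y := fun h => this (hpy h)
    omega
  · omega

theorem GrowthSq.unique {α β δ δ' γ : YoungDiagram} (h : GrowthSq α β δ γ)
    (h' : GrowthSq α β δ' γ) (hαβ : OneBox α β) (hβγ : OneBox β γ) (hαδ : OneBox α δ)
    (hδγ : OneBox δ γ) (hαδ' : OneBox α δ') (hδγ' : OneBox δ' γ) : δ = δ' := by
  obtain ⟨p, hp⟩ := hαβ.exists_boxStep
  obtain ⟨x, hx⟩ := hβγ.exists_boxStep
  obtain ⟨y, hy⟩ := hαδ.exists_boxStep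
  obtain ⟨q, hq⟩ := hδγ.exists_boxStep
  obtain ⟨y', hy'⟩ := hαδ'.exists_boxStep
  obtain ⟨q', hq'⟩ := hδγ'.exists_boxStep
  have h1 := h.contentSlide hp hx hy hq
  have h2 := h'.contentSlide hp hx hy' hq'
  have : y = y' := by unfold ContentSlide at h1 h2; omega
  subst this
  exact hy.right_unique hy'

/-- Removing a maximal box from a Young diagram. -/
theorem YoungDiagram.exists_boxStep_of_maximal {β : YoungDiagram} {i j : ℕ} (h : (i, j) ∈ β)
    (hmax : ∀ a b : ℕ, i ≤ a → j ≤ b → (a, b) ∈ β → a = i ∧ b = j) :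
    ∃ α : YoungDiagram, (i, j) ∉ α ∧
      (∀ a b : ℕ, (a, b) ∈ β ↔ (a, b) ∈ α ∨ (a = i ∧ b = j)) ∧ BoxStep α ((j : ℤ) - i) β := by
  classical
  let α : YoungDiagram := ⟨β.cells.erase (i, j), by
    rintro ⟨a, b⟩ ⟨a', b'⟩ hle hab
    simp only [Finset.coe_erase, Set.mem_sdiff, Finset.mem_coe, YoungDiagram.mem_cells,
      Set.mem_singleton_iff, Prod.mk.injEq, Prod.mk_le_mk] at hle hab ⊢
    refine ⟨β.up_left_mem hle.1 hle.2 hab.1, ?_⟩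
    rintro ⟨rfl, rfl⟩
    exact hab.2 (hmax a b hle.1 hle.2 hab.1)⟩
  have hα : ∀ a b : ℕ, (a, b) ∈ α ↔ ¬ (a = i ∧ b = j) ∧ (a, b) ∈ β := by
    intro a b
    rw [← YoungDiagram.mem_cells]
    simp [α]
  have h1 : (i, j) ∉ α := by simp [hα]
  have h2 : ∀ a b : ℕ, (a, b) ∈ β ↔ (a, b) ∈ α ∨ (a = i ∧ b = j) := by
    intro a b
    rw [hα]
    by_cases hab : a = i ∧ b = j
    · obtain ⟨rfl, rfl⟩ := hab
      simp [h]
    · simp [hab]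
  exact ⟨α, h1, h2, i, j, h1, h2, rfl⟩

/-- Every box of a Young diagram lies weakly north-west of a maximal one. -/
theorem YoungDiagram.exists_maximal_ge {β : YoungDiagram} {i j : ℕ} (h : (i, j) ∈ β) :
    ∃ i' j' : ℕ, i ≤ i' ∧ j ≤ j' ∧ (i', j') ∈ β ∧
      ∀ a b : ℕ, i' ≤ a → j' ≤ b → (a, b) ∈ β → a = i' ∧ b = j' := by
  obtain ⟨⟨i', j'⟩, hle, hmax⟩ := β.cells.exists_le_maximal ((YoungDiagram.mem_cells _).2 h)
  refine ⟨i', j', hle.1, hle.2, (YoungDiagram.mem_cells _).1 hmax.1, fun a b ha hb hab => ?_⟩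
  have := hmax.2 (y := (a, b)) ((YoungDiagram.mem_cells _).2 hab) ⟨ha, hb⟩
  exact ⟨le_antisymm this.1 ha, le_antisymm this.2 hb⟩

/-- Every growth square can be completed from its corners `α ⊆ β ⊆ γ`. -/
theorem exists_growthSq {α β γ : YoungDiagram} (hαβ : OneBox α β) (hβγ : OneBox β γ) :
    ∃ δ, OneBox α δ ∧ OneBox δ γ ∧ GrowthSq α β δ γ := by
  by_cases hex : ∃ c ∈ γ.cells, ∃ d ∈ γ.cells, c ∉ α.cells ∧ d ∉ α.cells ∧ c ≠ d ∧ ¬ AdjCell c d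
  swap
  · exact ⟨β, hαβ, hβγ, fun h => absurd h hex⟩
  obtain ⟨p, i, j, hn, hm, -⟩ := hαβ.exists_boxStep
  obtain ⟨x, i', j', hn', hm', -⟩ := hβγ.exists_boxStep
  have hγ : ∀ a b : ℕ, (a, b) ∈ γ → (a, b) ∉ α → (a = i ∧ b = j) ∨ (a = i' ∧ b = j') := by
    intro a b h1 h2
    rw [hm', hm] at h1
    tauto
  have hadj : ¬ AdjCell (i, j) (i', j') := by
    obtain ⟨⟨c₁, c₂⟩, hc, ⟨d₁, d₂⟩, hd, hcα, hdα, hcd, hna⟩ := hex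
    simp only [YoungDiagram.mem_cells] at hc hd hcα hdα
    have h1 := hγ _ _ hc hcα
    have h2 := hγ _ _ hd hdα
    simp only [AdjCell, ne_eq, Prod.mk.injEq] at hna hcd ⊢
    omega
  have hi'γ : (i', j') ∈ γ := (hm' i' j').2 (Or.inr ⟨rfl, rfl⟩)
  have hiβ : (i, j) ∈ β := (hm i j).2 (Or.inr ⟨rfl, rfl⟩)
  have hne : ¬ (i' = i ∧ j' = j) := by
    rintro ⟨rfl, rfl⟩
    exact hn' hiβ
  have hbetween : i ≤ i' → j ≤ j' → False := by
    intro h1 h2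
    have aux : ∀ u v : ℕ, i ≤ u → j ≤ v → u ≤ i' → v ≤ j' →
        (u = i ∧ v = j) ∨ (u = i' ∧ v = j') := fun u v h1 h2 h3 h4 =>
      hγ u v (γ.up_left_mem h3 h4 hi'γ) fun h => hn (α.up_left_mem h1 h2 h)
    simp only [AdjCell] at hadj
    by_cases hlt : i < i'
    · have := aux (i + 1) j (by omega) (by omega) (by omega) (by omega)
      omega
    · have := aux i (j + 1) (by omega) (by omega) (by omega) (by omega)
      omega
  obtain ⟨δ, h1, h2, h3⟩ := YoungDiagram.exists_boxStep_of_maximal (β := γ) (i := i) (j := j)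
    ((hm' i j).2 (Or.inl hiβ)) (by
      intro a b ha hb hab
      rcases hγ a b hab fun h => hn (α.up_left_mem ha hb h) with h | ⟨rfl, rfl⟩
      · exact h
      · exact (hbetween ha hb).elim)
  have hδ : ∀ a b : ℕ, (a, b) ∈ δ ↔ (a, b) ∈ α ∨ (a = i' ∧ b = j') := by
    intro a b
    have e1 := h2 a b
    rw [hm', hm] at e1
    by_cases hab : a = i ∧ b = j
    · obtain ⟨rfl, rfl⟩ := hab
      simp only [h1, hn, false_or, false_iff]
      omega
    · simp only [hab, or_false] at e1
      exact e1.symm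
  have hi'α : (i', j') ∉ α := fun h => hn' ((hm i' j').2 (Or.inl h))
  refine ⟨δ, BoxStep.oneBox ⟨i', j', hi'α, hδ, rfl⟩, h3.oneBox, fun _ => ?_⟩
  rintro rfl
  exact h1 hiβ

/-- Elementary dual equivalence of content words of length three: the first or the last letter lies
strictly between the other two, which are exchanged. -/
def ElemWord (p₁ p₂ p₃ q₁ q₂ q₃ : ℤ) : Prop :=
  (p₁ = q₁ ∧ p₂ = q₃ ∧ p₃ = q₂ ∧ ((p₂ < p₁ ∧ p₁ < p₃) ∨ (p₃ < p₁ ∧ p₁ < p₂))) ∨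
  (p₃ = q₃ ∧ p₁ = q₂ ∧ p₂ = q₁ ∧ ((p₁ < p₃ ∧ p₃ < p₂) ∨ (p₂ < p₃ ∧ p₃ < p₁)))

/-- Sliding a box through elementarily dual equivalent words preserves their equivalence and ends
with the same box. -/
theorem ElemWord.slide {p₁ p₂ p₃ q₁ q₂ q₃ x x₂ x₁ x₀ y₂ y₁ y₀ r₁ r₂ r₃ s₁ s₂ s₃ : ℤ}
    (h : ElemWord p₁ p₂ p₃ q₁ q₂ q₃)
    (hp₃ : ContentSlide p₃ x x₂ r₃) (hp₂ : ContentSlide p₂ x₂ x₁ r₂)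
    (hp₁ : ContentSlide p₁ x₁ x₀ r₁)
    (hq₃ : ContentSlide q₃ x y₂ s₃) (hq₂ : ContentSlide q₂ y₂ y₁ s₂)
    (hq₁ : ContentSlide q₁ y₁ y₀ s₁)
    (vp₁ : p₁ ≠ x₂) (vp₂ : p₂ ≠ x)
    (vp₃ : x₁ ≠ r₃) (vp₄ : p₁ ≠ r₂)
    (vq₁ : q₁ ≠ y₂) (vq₂ : q₂ ≠ x)
    (vq₃ : y₁ ≠ s₃) (vq₄ : q₁ ≠ s₂) :
    x₀ = y₀ ∧ ElemWord r₁ r₂ r₃ s₁ s₂ s₃ := by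
  unfold ContentSlide at *
  rcases h with ⟨rfl, rfl, rfl, h⟩ | ⟨rfl, rfl, rfl, h⟩ <;>
  rcases hp₃ with ⟨c1, rfl, rfl⟩ | ⟨c1, rfl, rfl⟩ <;>
  rcases hp₂ with ⟨c2, rfl, rfl⟩ | ⟨c2, rfl, rfl⟩ <;>
  rcases hq₃ with ⟨c3, rfl, rfl⟩ | ⟨c3, rfl, rfl⟩ <;>
  rcases hq₂ with ⟨c4, rfl, rfl⟩ | ⟨c4, rfl, rfl⟩ <;>
  rcases hp₁ with ⟨c5, rfl, rfl⟩ | ⟨c5, rfl, rfl⟩ <;>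
  rcases hq₁ with ⟨c6, rfl, rfl⟩ | ⟨c6, rfl, rfl⟩ <;>
  first
  | (exfalso; omega)
  | (unfold ElemWord; omega)

/-- Two consecutive rows `S` and `R` of a growth diagram. -/
structure IsGrowthRow (m : ℕ) (S R : ℕ → YoungDiagram) : Prop where
  bottom : IsChain' m S
  top : IsChain' m R
  vert : ∀ j ≤ m, OneBox (S j) (R j)
  square : ∀ j < m, GrowthSq (S j) (S (j + 1)) (R j) (R (j + 1))

theorem IsGrowth.growthRow {t m : ℕ} {L : ℕ → ℕ → YoungDiagram} (h : IsGrowth t m L) {i : ℕ}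
    (hi : i < t) : IsGrowthRow m (L i) (L (i + 1)) where
  bottom j hj := h.2.1 i j hi.le hj
  top j hj := h.2.1 (i + 1) j hi hj
  vert j hj := h.1 i j hi hj
  square j hj := h.2.2 i j hi hj

/-- A chain together with a box added to its last diagram extends to a row of squares. -/
theorem exists_growthRow {m : ℕ} {S : ℕ → YoungDiagram} (hS : IsChain' m S) {γ : YoungDiagram}
    (hγ : OneBox (S m) γ) : ∃ R, IsGrowthRow m S R ∧ R m = γ := by
  induction m generalizing γ with
  | zero =>
    refine ⟨fun _ => γ, ⟨hS, fun j hj => by omega, fun j hj => ?_, fun j hj => by omega⟩, rfl⟩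
    obtain rfl : j = 0 := by omega
    exact hγ
  | succ m ih =>
    obtain ⟨δ, h1, h2, h3⟩ := exists_growthSq (hS m (by omega)) hγ
    obtain ⟨R, hR, rfl⟩ := ih (fun j hj => hS j (by omega)) h1
    refine ⟨fun j => if j ≤ m then R j else γ, ⟨hS, fun j hj => ?_, fun j hj => ?_, fun j hj => ?_⟩,
      by simp⟩
    · rcases (show j < m ∨ j = m by omega) with h | rfl
      · simpa [h.le, h] using hR.top j h
      · simpa using h2
    · rcases (show j ≤ m ∨ j = m + 1 by omega) with h | rfl
      · simpa [h] using hR.vert j h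
      · simpa using hγ
    · rcases (show j < m ∨ j = m by omega) with h | rfl
      · simpa [h.le, h] using hR.square j h
      · simpa using h3

/-- Any chain can be shuffled with any chain extending it. -/
theorem exists_isGrowth {m t : ℕ} {S T : ℕ → YoungDiagram} (hS : IsChain' m S)
    (hT : IsChain' t T) (hST : S m = T 0) :
    ∃ L, IsGrowth t m L ∧ (∀ j, L 0 j = S j) ∧ ∀ i ≤ t, L i m = T i := by
  induction t with
  | zero =>
    refine ⟨fun _ => S, ⟨fun i j hi => by omega, fun i j _ hj => hS j hj, fun i j hi => by omega⟩,
      fun _ => rfl, fun i hi => ?_⟩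
    obtain rfl : i = 0 := by omega
    exact hST
  | succ t ih =>
    obtain ⟨L, hL, hL0, hLm⟩ := ih fun i hi => hT i (by omega)
    obtain ⟨R, hR, hRm⟩ := exists_growthRow (S := L t) (m := m) (γ := T (t + 1))
      (fun j hj => hL.2.1 t j le_rfl hj) (by rw [hLm t le_rfl]; exact hT t (by omega))
    refine ⟨fun i => if i ≤ t then L i else R, ⟨fun i j hi hj => ?_, fun i j hi hj => ?_,
      fun i j hi hj => ?_⟩, fun j => by simpa using hL0 j, fun i hi => ?_⟩
    · rcases (show i < t ∨ i = t by omega) with h | rfl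
      · simpa [h.le, h] using hL.1 i j h hj
      · simpa using hR.vert j hj
    · rcases (show i ≤ t ∨ i = t + 1 by omega) with h | rfl
      · simpa [h] using hL.2.1 i j h hj
      · simpa using hR.top j hj
    · rcases (show i < t ∨ i = t by omega) with h | rfl
      · simpa [h.le, h] using hL.2.2 i j h hj
      · simpa using hR.square j hj
    · rcases (show i ≤ t ∨ i = t + 1 by omega) with h | rfl
      · simpa [h] using hLm i h
      · simpa using hRm

/-- Where the lower rows agree, agreement of the upper rows propagates to the left. -/
theorem IsGrowthRow.eq_of_eq {m : ℕ} {S S' R R' : ℕ → YoungDiagram} (h : IsGrowthRow m S R)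
    (h' : IsGrowthRow m S' R') {a b : ℕ} (hb : b ≤ m) (hS : ∀ j, a ≤ j → j ≤ b → S j = S' j)
    (hR : R b = R' b) {j : ℕ} (haj : a ≤ j) (hjb : j ≤ b) : R j = R' j := by
  induction hjb using Nat.decreasingInduction with
  | self => exact hR
  | of_succ j hj ih =>
    have ih := ih (by omega)
    have h1 := h.square j (by omega)
    have h2 := h'.square j (by omega)
    have v1 := h.vert j (by omega)
    have v2 := h'.vert j (by omega)
    have v3 := h.vert (j + 1) (by omega)
    have t1 := h.top j (by omega)
    have t2 := h'.top j (by omega)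
    have b1 := h.bottom j (by omega)
    rw [← ih, ← hS j haj hj.le, ← hS (j + 1) (by omega) hj] at *
    rw [← ih] at t2
    exact h1.unique h2 b1 v3 v1 t1 v2 t2

/-- Chains which differ by an elementary dual equivalence in a window of length three. -/
def ElemDualEquiv (m : ℕ) (S S' : ℕ → YoungDiagram) : Prop :=
  ∃ k, k + 3 ≤ m ∧ (∀ j ≤ m, j ≠ k + 1 → j ≠ k + 2 → S j = S' j) ∧
    ∃ p₁ p₂ p₃ q₁ q₂ q₃ : ℤ, BoxStep (S k) p₁ (S (k + 1)) ∧
      BoxStep (S (k + 1)) p₂ (S (k + 2)) ∧ BoxStep (S (k + 2)) p₃ (S (k + 3)) ∧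
      BoxStep (S' k) q₁ (S' (k + 1)) ∧
      BoxStep (S' (k + 1)) q₂ (S' (k + 2)) ∧ BoxStep (S' (k + 2)) q₃ (S' (k + 3)) ∧
      ElemWord p₁ p₂ p₃ q₁ q₂ q₃

theorem ElemDualEquiv.zero_eq {m : ℕ} {S S' : ℕ → YoungDiagram} (h : ElemDualEquiv m S S') :
    S 0 = S' 0 := by
  obtain ⟨k, hk, he, -⟩ := h
  exact he 0 (by omega) (by omega) (by omega)

theorem ElemDualEquiv.growthRow {m : ℕ} {S S' R R' : ℕ → YoungDiagram}
    (he : ElemDualEquiv m S S') (h : IsGrowthRow m S R) (h' : IsGrowthRow m S' R')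
    (hR : R m = R' m) : ElemDualEquiv m R R' := by
  obtain ⟨k, hk, he, p₁, p₂, p₃, q₁, q₂, q₃, hp₁, hp₂, hp₃, hq₁, hq₂, hq₃, hw⟩ := he
  have hhigh : ∀ j, k + 3 ≤ j → j ≤ m → R j = R' j := fun j hj hjm =>
    h.eq_of_eq h' le_rfl (fun j hj hjm => he j hjm (by omega) (by omega)) hR hj hjm
  have h3 := hhigh (k + 3) le_rfl hk
  have hS3 := he (k + 3) (by omega) (by omega) (by omega)
  obtain ⟨x, hx⟩ := (h.vert (k + 3) (by omega)).exists_boxStep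
  obtain ⟨x₂, hx₂⟩ := (h.vert (k + 2) (by omega)).exists_boxStep
  obtain ⟨x₁, hx₁⟩ := (h.vert (k + 1) (by omega)).exists_boxStep
  obtain ⟨x₀, hx₀⟩ := (h.vert k (by omega)).exists_boxStep
  obtain ⟨y₂, hy₂⟩ := (h'.vert (k + 2) (by omega)).exists_boxStep
  obtain ⟨y₁, hy₁⟩ := (h'.vert (k + 1) (by omega)).exists_boxStep
  obtain ⟨y₀, hy₀⟩ := (h'.vert k (by omega)).exists_boxStep
  obtain ⟨r₁, hr₁⟩ := (h.top k (by omega)).exists_boxStep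
  obtain ⟨r₂, hr₂⟩ := (h.top (k + 1) (by omega)).exists_boxStep
  obtain ⟨r₃, hr₃⟩ := (h.top (k + 2) (by omega)).exists_boxStep
  obtain ⟨s₁, hs₁⟩ := (h'.top k (by omega)).exists_boxStep
  obtain ⟨s₂, hs₂⟩ := (h'.top (k + 1) (by omega)).exists_boxStep
  obtain ⟨s₃, hs₃⟩ := (h'.top (k + 2) (by omega)).exists_boxStep
  have hx' : BoxStep (S' (k + 3)) x (R' (k + 3)) := by rw [← h3, ← hS3]; exact hx
  obtain ⟨hxy, hw'⟩ := hw.slide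
    ((h.square (k + 2) (by omega)).contentSlide hp₃ hx hx₂ hr₃)
    ((h.square (k + 1) (by omega)).contentSlide hp₂ hx₂ hx₁ hr₂)
    ((h.square k (by omega)).contentSlide hp₁ hx₁ hx₀ hr₁)
    ((h'.square (k + 2) (by omega)).contentSlide hq₃ hx' hy₂ hs₃)
    ((h'.square (k + 1) (by omega)).contentSlide hq₂ hy₂ hy₁ hs₂)
    ((h'.square k (by omega)).contentSlide hq₁ hy₁ hy₀ hs₁)
    (hp₁.content_ne_of_three hp₂ hx₂) (hp₂.content_ne_of_three hp₃ hx)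
    (hx₁.content_ne_of_three hr₂ hr₃) (hp₁.content_ne_of_three hx₁ hr₂)
    (hq₁.content_ne_of_three hq₂ hy₂) (hq₂.content_ne_of_three hq₃ hx')
    (hy₁.content_ne_of_three hs₂ hs₃) (hq₁.content_ne_of_three hy₁ hs₂)
  subst hxy
  have hk0 := he k (by omega) (by omega) (by omega)
  rw [← hk0] at hy₀
  have hRk := hx₀.right_unique hy₀
  refine ⟨k, hk, fun j hj ha hb => ?_, r₁, r₂, r₃, s₁, s₂, s₃, hr₁, hr₂, hr₃, hs₁, hs₂, hs₃, hw'⟩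
  rcases (show j ≤ k ∨ k + 3 ≤ j by omega) with hjk | hjk
  · exact h.eq_of_eq h' (a := 0) (b := k) (by omega)
      (fun j _ hjk => he j (by omega) (by omega) (by omega)) hRk (Nat.zero_le _) hjk
  · exact hhigh j hjk hj

/-- Shuffling a chain lying above `S` or `S'` with either of them gives the same result. -/
def TopEquiv (m : ℕ) (S S' : ℕ → YoungDiagram) : Prop :=
  ∀ t T A B A' B', ShufflesTo m t S T A B → ShufflesTo m t S' T A' B' → ∀ i, i ≤ t → A i = A' i

theorem TopEquiv.symm {m : ℕ} {S S' : ℕ → YoungDiagram} (h : TopEquiv m S S') :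
    TopEquiv m S' S :=
  fun t T A B A' B' h1 h2 i hi => (h t T A' B' A B h2 h1 i hi).symm

theorem TopEquiv.trans {m : ℕ} {S S' S'' : ℕ → YoungDiagram} (h : TopEquiv m S S')
    (h' : TopEquiv m S' S'') (hS' : IsChain' m S') (hm : S m = S' m) : TopEquiv m S S'' := by
  intro t T A B A'' B'' h1 h2 i hi
  have ⟨L, hL, hL0, hLT, _⟩ := h1
  obtain ⟨L', hL', hL0', hLT'⟩ := exists_isGrowth (t := t) (T := T) hS'
    (fun i hi => by
      rw [← hLT i hi.le, ← hLT (i + 1) hi]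
      exact hL.1 i m hi le_rfl)
    (by rw [← hm, ← hL0 m le_rfl, hLT 0 (Nat.zero_le _)])
  have h3 : ShufflesTo m t S' T (fun i => L' i 0) (L' t) :=
    ⟨L', hL', fun j _ => hL0' j, hLT', fun _ _ => rfl, fun _ _ => rfl⟩
  exact (h t T A B _ _ h1 h3 i hi).trans (h' t T _ _ A'' B'' h3 h2 i hi)

theorem ElemDualEquiv.topEquiv {m : ℕ} {S S' : ℕ → YoungDiagram} (h : ElemDualEquiv m S S') :
    TopEquiv m S S' := by
  rintro t T A B A' B' ⟨L, hL, hL0, hLT, hLA, -⟩ ⟨L', hL', hL0', hLT', hLA', -⟩ i hi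
  suffices H : ∀ i ≤ t, ElemDualEquiv m (L i) (L' i) by
    rw [← hLA i hi, ← hLA' i hi]
    exact (H i hi).zero_eq
  intro i hi
  induction i with
  | zero =>
    obtain ⟨k, hk, he, hw⟩ := h
    refine ⟨k, hk, fun j hj => ?_, ?_⟩
    · rw [hL0 j hj, hL0' j hj]
      exact he j hj
    · rwa [hL0 k (by omega), hL0 (k + 1) (by omega), hL0 (k + 2) (by omega), hL0 (k + 3) (by omega),
        hL0' k (by omega), hL0' (k + 1) (by omega), hL0' (k + 2) (by omega),
        hL0' (k + 3) (by omega)]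
  | succ i ih =>
    exact (ih (by omega)).growthRow (hL.growthRow hi) (hL'.growthRow hi)
      (by rw [hLT _ hi, hLT' _ hi])

theorem TopEquiv.succ {m : ℕ} {S S' : ℕ → YoungDiagram} (h : TopEquiv m S S')
    (hm : S m = S' m) : TopEquiv (m + 1) S S' := by
  rintro t T A B A' B' ⟨L, hL, hL0, hLT, hLA, -⟩ ⟨L', hL', hL0', hLT', hLA', -⟩
  have hcol : ∀ i ≤ t, L i m = L' i m := by
    intro i hi
    induction i with
    | zero => rw [hL0 m (by omega), hL0' m (by omega), hm]
    | succ i ih =>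
      have ih := ih (by omega)
      have e1 : L i (m + 1) = L' i (m + 1) := by rw [hLT i (by omega), hLT' i (by omega)]
      have e2 : L (i + 1) (m + 1) = L' (i + 1) (m + 1) := by rw [hLT _ hi, hLT' _ hi]
      have r := hL.growthRow hi
      have r' := hL'.growthRow hi
      refine r.eq_of_eq r' (a := m) le_rfl (fun j h1 h2 => ?_) e2 le_rfl (Nat.le_succ m)
      rcases (show j = m ∨ j = m + 1 by omega) with rfl | rfl
      · exact ih
      · exact e1
  have restrict : ∀ {K : ℕ → ℕ → YoungDiagram}, IsGrowth t (m + 1) K → IsGrowth t m K :=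
    fun hK => ⟨fun i j hi hj => hK.1 i j hi (by omega), fun i j hi hj => hK.2.1 i j hi (by omega),
      fun i j hi hj => hK.2.2 i j hi (by omega)⟩
  exact h t (fun i => L i m) A (L t) A' (L' t)
    ⟨L, restrict hL, fun j hj => hL0 j (by omega), fun _ _ => rfl, hLA, fun _ _ => rfl⟩
    ⟨L', restrict hL', fun j hj => hL0' j (by omega), fun i hi => (hcol i hi).symm, hLA',
      fun _ _ => rfl⟩

theorem IsChain'.card {m : ℕ} {S : ℕ → YoungDiagram} (hS : IsChain' m S) (h0 : S 0 = ⊥) {j : ℕ}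
    (hj : j ≤ m) : (S j).cells.card = j := by
  induction j with
  | zero => simp [h0]
  | succ j ih => rw [(hS j hj).2, ih (by omega)]

/-- Appending a diagram to a chain. -/
theorem IsChain'.append {m : ℕ} {S : ℕ → YoungDiagram} (hS : IsChain' m S) {β : YoungDiagram}
    (h : OneBox (S m) β) : IsChain' (m + 1) (fun j => if j ≤ m then S j else β) := by
  intro j hj
  rcases (show j < m ∨ j = m by omega) with h' | rfl
  · simpa [h'.le, h'] using hS j h'
  · simpa using h

theorem YoungDiagram.exists_chain (n : ℕ) (α : YoungDiagram) (h : α.cells.card = n) :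
    ∃ S, IsChain' n S ∧ S 0 = ⊥ ∧ S n = α := by
  induction n generalizing α with
  | zero =>
    refine ⟨fun _ => ⊥, fun i hi => by omega, rfl, ?_⟩
    ext x
    simp [Finset.card_eq_zero.mp h]
  | succ n ih =>
    obtain ⟨⟨i, j⟩, hij⟩ : α.cells.Nonempty := Finset.card_pos.mp (by omega)
    obtain ⟨i, j, -, -, hij, hmax⟩ :=
      YoungDiagram.exists_maximal_ge ((YoungDiagram.mem_cells _).1 hij)
    obtain ⟨β, -, -, hβ⟩ := YoungDiagram.exists_boxStep_of_maximal hij hmax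
    obtain ⟨S, hS, h0, hn⟩ := ih β (by have := hβ.oneBox.2; omega)
    exact ⟨_, hS.append (hn ▸ hβ.oneBox), by simpa using h0, by simp⟩

/-- If `γ` is obtained from two different diagrams by adding a box, then removing both boxes and
then a box on a diagonal strictly between them yields Young diagrams. -/
theorem BoxStep.exists_common {β β' γ : YoungDiagram} {c c' : ℤ} (h : BoxStep β c γ)
    (h' : BoxStep β' c' γ) (hlt : c < c') : ∃ ν μ b, BoxStep ν b μ ∧ BoxStep μ c' β ∧
      BoxStep μ c β' ∧ c < b ∧ b < c' := by
  obtain ⟨i, j, hn, hm, hc⟩ := h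
  obtain ⟨i', j', hn', hm', hc'⟩ := h'
  have hmax : ∀ a b : ℕ, i ≤ a → j ≤ b → (a, b) ∈ γ → a = i ∧ b = j := fun a b ha hb hab =>
    ((hm a b).1 hab).resolve_left fun h => hn (β.up_left_mem ha hb h)
  have hmax' : ∀ a b : ℕ, i' ≤ a → j' ≤ b → (a, b) ∈ γ → a = i' ∧ b = j' := fun a b ha hb hab =>
    ((hm' a b).1 hab).resolve_left fun h => hn' (β'.up_left_mem ha hb h)
  have hij : (i, j) ∈ γ := (hm i j).2 (Or.inr ⟨rfl, rfl⟩)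
  have hij' : (i', j') ∈ γ := (hm' i' j').2 (Or.inr ⟨rfl, rfl⟩)
  have hi : i' < i := by
    by_contra! hle
    have := hmax i' j' hle (by omega) hij'
    omega
  have hj : j < j' := by
    by_contra! hle
    have := hmax' i j hi.le hle hij
    omega
  have hij'β : (i', j') ∈ β := ((hm i' j').1 hij').resolve_right (by omega)
  have hβγ : ∀ {a b : ℕ}, (a, b) ∈ β → (a, b) ∈ γ := fun h => (hm _ _).2 (Or.inl h)
  obtain ⟨μ, hμn, hμm, hμ⟩ := YoungDiagram.exists_boxStep_of_maximal hij'β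
    fun a b ha hb hab => hmax' a b ha hb (hβγ hab)
  have hμβ : ∀ {a b : ℕ}, (a, b) ∈ μ → (a, b) ∈ β := fun h => (hμm _ _).2 (Or.inl h)
  have hμ' : BoxStep μ c β' := by
    refine ⟨i, j, fun h => hn (hμβ h), fun a b => ?_, hc⟩
    have e1 := hm a b
    have e2 := hm' a b
    have e3 := hμm a b
    by_cases hab : a = i' ∧ b = j'
    · obtain ⟨rfl, rfl⟩ := hab
      simp only [hn', hμn, false_or, false_iff]
      omega
    · simp only [hab, or_false] at e2 e3
      rw [← e2, e1, e3]
  have hmid : (i', j) ∈ μ := by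
    have h1 := γ.up_left_mem hi.le le_rfl hij
    have h2 := ((hm i' j).1 h1).resolve_right (by omega)
    exact ((hμm i' j).1 h2).resolve_right (by omega)
  obtain ⟨a, b, ha, hb, hab, habmax⟩ := YoungDiagram.exists_maximal_ge hmid
  obtain ⟨ν, -, -, hν⟩ := YoungDiagram.exists_boxStep_of_maximal hab habmax
  have hai : a < i := by
    by_contra! hle
    obtain ⟨rfl, rfl⟩ := hmax a b hle hb (hβγ (hμβ hab))
    exact hn (hμβ hab)
  have hbj : b < j' := by
    by_contra! hle
    obtain ⟨rfl, rfl⟩ := hmax' a b ha hle (hβγ (hμβ hab))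
    exact hμn hab
  refine ⟨ν, μ, _, hν, ?_, hμ', by omega, by omega⟩
  rwa [← hc']

theorem topEquiv_of_straight {m : ℕ} {S S' : ℕ → YoungDiagram} (hS : IsChain' m S)
    (hS' : IsChain' m S') (h0 : S 0 = ⊥) (h0' : S' 0 = ⊥) (hend : S m = S' m) :
    TopEquiv m S S' := by
  induction m generalizing S S' with
  | zero =>
    rintro t T A B A' B' ⟨L, -, -, hLT, hLA, -⟩ ⟨L', -, -, hLT', hLA', -⟩ i hi
    rw [← hLA i hi, ← hLA' i hi, hLT i hi, hLT' i hi]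
  | succ m ih =>
    have ih' : ∀ {U V : ℕ → YoungDiagram}, IsChain' (m + 1) U → IsChain' (m + 1) V → U 0 = ⊥ →
        V 0 = ⊥ → U m = V m → TopEquiv (m + 1) U V := fun hU hV hU0 hV0 hUV =>
      (ih (fun j hj => hU j (by omega)) (fun j hj => hV j (by omega)) hU0 hV0 hUV).succ hUV
    obtain ⟨c, hc⟩ := (hS m (by omega)).exists_boxStep
    obtain ⟨c', hc'⟩ := (hS' m (by omega)).exists_boxStep
    wlog hlt : c ≤ c' generalizing S S' c c'
    · exact (this hS' hS h0' h0 hend.symm c' hc' c hc (by omega)).symm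
    rcases hlt.eq_or_lt with rfl | hlt
    · exact ih' hS hS' h0 h0' (hc.left_unique (hend ▸ hc'))
    rw [← hend] at hc'
    obtain ⟨ν, μ, b, hν, hμ, hμ', hcb, hbc⟩ := hc.exists_common hc' hlt
    obtain ⟨U, hU, hU0, hUn⟩ := YoungDiagram.exists_chain _ ν rfl
    have hm : m = ν.cells.card + 2 := by
      have := hS.card h0 (j := m) (by omega)
      have := hν.oneBox.2
      have := hμ.oneBox.2
      omega
    generalize ν.cells.card = n at *
    subst hm hUn
    let V : YoungDiagram → ℕ → YoungDiagram := fun β j =>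
      if j ≤ n + 2 then if j ≤ n + 1 then if j ≤ n then U j else μ else β else S (n + 2 + 1)
    have hV : ∀ β, OneBox μ β → OneBox β (S (n + 2 + 1)) → IsChain' (n + 2 + 1) (V β) := by
      intro β h1 h2
      refine IsChain'.append (IsChain'.append (IsChain'.append hU hν.oneBox) ?_) ?_
      · simpa using h1
      · simpa using h2
    have hV0 : ∀ β, V β 0 = ⊥ := fun β => by simpa [V] using hU0
    have V0 : ∀ β, V β n = U n := fun β => by simp [V]
    have V1 : ∀ β, V β (n + 1) = μ := fun β => by simp [V]
    have V2 : ∀ β, V β (n + 2) = β := fun β => by simp [V]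
    have V3 : ∀ β, V β (n + 3) = S (n + 3) := fun β => by simp [V]
    have hVV : ElemDualEquiv (n + 2 + 1) (V (S (n + 2))) (V (S' (n + 2))) := by
      refine ⟨n, le_rfl, fun j hj h1 h2 => ?_, b, c', c, b, c, c', ?_⟩
      · rcases (show j ≤ n ∨ j = n + 3 by omega) with h | rfl
        · simp [V, h, show j ≤ n + 1 by omega, show j ≤ n + 2 by omega]
        · rw [V3, V3]
      · simp only [V0, V1, V2, V3]
        exact ⟨hν, hμ, hc, hν, hμ', hc', by unfold ElemWord; omega⟩
    have hV1 := hV _ hμ.oneBox hc.oneBox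
    have hV2 := hV _ hμ'.oneBox hc'.oneBox
    have e1 := ih' hS hV1 h0 (hV0 _) (V2 _).symm
    have e2 := ih' hV2 hS' (hV0 _) h0' (V2 _)
    exact (e1.trans hVV.topEquiv hV1 (V3 _).symm).trans e2 hV2 (V3 _).symm

/-- Fundamental theorem of jeu de taquin / dual equivalence: any two standard Young
tableaux of the same straight shape (encoded as chains of partitions starting at the
empty partition) are dual equivalent. -/
theorem straight_shapes_dual_equivalent
    (m : ℕ) (S S' : ℕ → YoungDiagram)
    (hS : IsChain' m S) (hS' : IsChain' m S')
    (h0 : S 0 = ⊥) (h0' : S' 0 = ⊥) (hend : S m = S' m) :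
    DualEquiv m S S' := by
  refine ⟨h0.trans h0'.symm, hend, topEquiv_of_straight hS hS' h0 h0' hend, ?_⟩
  rintro t T A B A' B' ⟨L, hL, -, hLS, -, hLB⟩ ⟨L', -, -, hLS', -, hLB'⟩ i hi
  obtain rfl : t = 0 := by
    by_contra ht
    have h := (hL.2.1 0 (t - 1) (Nat.zero_le _) (by omega)).2
    rw [Nat.sub_add_cancel (by omega), hLS 0 (Nat.zero_le _), h0] at h
    simp at h
  obtain rfl : i = 0 := by omega
  rw [← hLB 0 hi, ← hLB' 0 hi, hLS m le_rfl, hLS' m le_rfl, hend]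
end
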